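/- For a TS-module M of finite length and degree one, the following are equivalent: (1) M is perfect; (2) M admits a model, i.e. an injective TS-morphism M → C_b^∞(k^×); (3) the S-coinvariant module π_0(M) = M_S is a cyclic T-module and, for every smooth character χ of T with π_0(M)_{T,χ} ≠ 0, there exists an injective TS-morphism 𝔼[χ] → M. -/

import Mathlib

noncomputable section

open scoped Classical

namespace PSW

/-! ### The affine group `λ.b : x ↦ λ·x + b` over a field `K`. -/

@[ext]
structure Aff (K : Type*) [Field K] where
  t : Kˣ
  s : K

namespace Aff

variable {K : Type*} [Field K]

instance : Mul (Aff K) := ⟨fun g h => ⟨g.t * h.t, g.s + (g.t : K) * h.s⟩⟩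
instance : One (Aff K) := ⟨⟨1, 0⟩⟩
instance : Inv (Aff K) := ⟨fun g => ⟨g.t⁻¹, -(((g.t⁻¹ : Kˣ) : K) * g.s)⟩⟩

@[simp] lemma mul_t (g h : Aff K) : (g * h).t = g.t * h.t := rfl
@[simp] lemma mul_s (g h : Aff K) : (g * h).s = g.s + (g.t : K) * h.s := rfl
@[simp] lemma one_t : (1 : Aff K).t = 1 := rfl
@[simp] lemma one_s : (1 : Aff K).s = 0 := rfl
@[simp] lemma inv_t (g : Aff K) : (g⁻¹).t = g.t⁻¹ := rfl
@[simp] lemma inv_s (g : Aff K) : (g⁻¹).s = -(((g.t⁻¹ : Kˣ) : K) * g.s) := rfl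

instance : Group (Aff K) where
  mul_assoc a b c := by
    ext
    · simp [mul_assoc]
    · simp only [mul_s, mul_t, Units.val_mul]; ring
  one_mul a := by ext <;> simp
  mul_one a := by ext <;> simp
  inv_mul_cancel a := by
    ext
    · simp
    · simp

/-- The element `x_λ` of the group `TS`. -/
def xT (u : Kˣ) : Aff K := ⟨u, 0⟩

/-- The element `s_b` of the group `TS`. -/
def sS (b : K) : Aff K := ⟨1, b⟩

@[simp] lemma xT_t (u : Kˣ) : (xT u : Aff K).t = u := rfl
@[simp] lemma xT_s (u : Kˣ) : (xT u : Aff K).s = 0 := rfl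
@[simp] lemma sS_t (b : K) : (sS b : Aff K).t = 1 := rfl
@[simp] lemma sS_s (b : K) : (sS b : Aff K).s = b := rfl

/-- `T ≅ k^×` as a subgroup of `TS`. -/
def xTHom : Kˣ →* Aff K where
  toFun := xT
  map_one' := rfl
  map_mul' u v := by ext <;> simp [xT]

@[simp] lemma xTHom_apply (u : Kˣ) : (xTHom u : Aff K) = xT u := rfl

lemma mul_sS (g : Aff K) (b : K) : g * sS b = sS ((g.t : K) * b) * g := by
  ext
  · simp
  · simp [add_comm]

lemma sS_mul (b : K) (g : Aff K) : sS b * g = g * sS (((g.t⁻¹ : Kˣ) : K) * b) := by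
  ext
  · simp
  · simp [Units.mul_inv_cancel_left, add_comm]

lemma aff_decomp (g : Aff K) : g = xT g.t * sS (((g.t⁻¹ : Kˣ) : K) * g.s) := by
  ext
  · simp
  · simp [Units.mul_inv_cancel_left]

instance [TopologicalSpace K] : TopologicalSpace (Aff K) :=
  TopologicalSpace.induced (fun g : Aff K => ((g.t, g.s) : Kˣ × K)) inferInstance

end Aff

/-! ### Generalities on representations of a monoid on complex vector spaces. -/

namespace GRep

variable {G : Type*} [Monoid G]

section MonoidModules

variable {V W : Type*} [AddCommMonoid V] [Module ℂ V] [AddCommMonoid W] [Module ℂ W]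

/-- A submodule invariant under the representation. -/
def Invariant (ρ : Representation ℂ G V) (U : Submodule ℂ V) : Prop :=
  ∀ (g : G) (v : V), v ∈ U → ρ g v ∈ U

/-- Equivariance of a linear map with respect to two representations. -/
def Equivariant (ρ : Representation ℂ G V) (σ : Representation ℂ G W) (f : V →ₗ[ℂ] W) : Prop :=
  ∀ (g : G) (v : V), f (ρ g v) = σ g (f v)

/-- Isomorphism of representations. -/
def Iso (ρ : Representation ℂ G V) (σ : Representation ℂ G W) : Prop :=
  ∃ e : V ≃ₗ[ℂ] W, ∀ (g : G) (v : V), e (ρ g v) = σ g (e v)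

/-- Irreducibility. -/
def Irred (ρ : Representation ℂ G V) : Prop :=
  Nontrivial V ∧ ∀ U : Submodule ℂ V, Invariant ρ U → U = ⊥ ∨ U = ⊤

/-- Subrepresentation on an invariant submodule. -/
def sub (ρ : Representation ℂ G V) {U : Submodule ℂ V} (hU : Invariant ρ U) :
    Representation ℂ G ↥U where
  toFun g := (ρ g).restrict fun v hv => hU g v hv
  map_one' := by
    apply LinearMap.ext; intro v; apply Subtype.ext
    simp [LinearMap.restrict_apply]
  map_mul' g h := by
    apply LinearMap.ext; intro v; apply Subtype.ext
    simp [LinearMap.restrict_apply]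

@[simp] lemma sub_apply (ρ : Representation ℂ G V) {U : Submodule ℂ V} (hU : Invariant ρ U)
    (g : G) (v : ↥U) : ((sub ρ hU g v : ↥U) : V) = ρ g (v : V) := rfl

lemma ker_invariant (ρ : Representation ℂ G V) (σ : Representation ℂ G W)
    (f : V →ₗ[ℂ] W) (hf : Equivariant ρ σ f) : Invariant ρ (LinearMap.ker f) := by
  intro g v hv
  rw [LinearMap.mem_ker] at hv ⊢
  rw [hf g v, hv, map_zero]

lemma range_invariant (ρ : Representation ℂ G V) (σ : Representation ℂ G W)
    (f : V →ₗ[ℂ] W) (hf : Equivariant ρ σ f) : Invariant σ (LinearMap.range f) := by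
  rintro g w ⟨v, rfl⟩
  exact ⟨ρ g v, hf g v⟩

lemma map_invariant (ρ : Representation ℂ G V) (σ : Representation ℂ G W)
    (f : V →ₗ[ℂ] W) (hf : Equivariant ρ σ f) (U : Submodule ℂ V) (hU : Invariant ρ U) :
    Invariant σ (U.map f) := by
  rintro g w ⟨v, hv, rfl⟩
  exact ⟨ρ g v, hU g v hv, hf g v⟩

end MonoidModules

section GroupModules

variable {V W : Type*} [AddCommGroup V] [Module ℂ V] [AddCommGroup W] [Module ℂ W]

/-- Quotient representation. -/
def quot (ρ : Representation ℂ G V) (U : Submodule ℂ V) (hU : Invariant ρ U) :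
    Representation ℂ G (V ⧸ U) where
  toFun g := U.mapQ U (ρ g) fun v hv => hU g v hv
  map_one' := by
    apply LinearMap.ext; intro x
    obtain ⟨v, rfl⟩ := Submodule.Quotient.mk_surjective U x
    simp [Submodule.mapQ_apply]
  map_mul' g h := by
    apply LinearMap.ext; intro x
    obtain ⟨v, rfl⟩ := Submodule.Quotient.mk_surjective U x
    simp [Submodule.mapQ_apply]

@[simp] lemma quot_apply (ρ : Representation ℂ G V) (U : Submodule ℂ V) (hU : Invariant ρ U)
    (g : G) (v : V) :
    quot ρ U hU g (Submodule.Quotient.mk v) = Submodule.Quotient.mk (ρ g v) := rfl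

/-- Subquotient representation on `B/A`. -/
def subquot (ρ : Representation ℂ G V) {A B : Submodule ℂ V}
    (hA : Invariant ρ A) (hB : Invariant ρ B) :
    Representation ℂ G (↥B ⧸ A.comap B.subtype) :=
  quot (sub ρ hB) (A.comap B.subtype) fun g v hv => hA g v.1 hv

lemma mkQ_equivariant (ρ : Representation ℂ G V) (U : Submodule ℂ V) (hU : Invariant ρ U) :
    Equivariant ρ (quot ρ U hU) U.mkQ := by
  intro g v
  show Submodule.Quotient.mk (ρ g v) = quot ρ U hU g (Submodule.Quotient.mk v)
  rw [quot_apply]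

end GroupModules

end GRep

/-! ### TS-modules: representations of the affine group. -/

/-- A `TS`-module structure on `V` is a representation of the group `TS ≅ Gl_a(1)`. -/
abbrev Rep (K : Type*) [Field K] (V : Type*) [AddCommGroup V] [Module ℂ V] :=
  Representation ℂ (Aff K) V

section RepDefs

open Aff

variable {K : Type*} [Field K]
variable {V W : Type*} [AddCommGroup V] [Module ℂ V] [AddCommGroup W] [Module ℂ W]

/-- Smoothness: every vector has open stabilizer. -/
def IsSmoothRep [TopologicalSpace K] (ρ : Rep K V) : Prop :=
  ∀ v : V, IsOpen {g : Aff K | ρ g v = v}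

/-- Smoothness of a `T`-module, i.e. of a representation of `T ≅ k^×`. -/
def TIsSmooth {X : Type*} [AddCommMonoid X] [Module ℂ X] [TopologicalSpace K]
    (τ : Representation ℂ Kˣ X) : Prop :=
  ∀ x : X, IsOpen {u : Kˣ | τ u x = x}

/-- Smooth character of `T ≅ k^×` (open kernel, equivalently locally constant). -/
def SmoothMulChar [TopologicalSpace K] (χ : Kˣ →* ℂˣ) : Prop :=
  IsOpen {u : Kˣ | χ u = 1}

/-- The space `V^S` of `S`-invariants. -/
def sInv (ρ : Rep K V) : Submodule ℂ V where
  carrier := {v | ∀ b : K, ρ (sS b) v = v}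
  zero_mem' := fun b => map_zero _
  add_mem' {a b} ha hb := fun c => by rw [map_add, ha c, hb c]
  smul_mem' c v hv := fun b => by rw [map_smul, hv b]

@[simp] lemma mem_sInv (ρ : Rep K V) (v : V) :
    v ∈ sInv ρ ↔ ∀ b : K, ρ (sS b) v = v := Iff.rfl

/-- The `χ`-eigenspace `X^{T,χ}` of a `T`-module. -/
def tEigenT {X : Type*} [AddCommMonoid X] [Module ℂ X]
    (τ : Representation ℂ Kˣ X) (χ : Kˣ →* ℂˣ) : Submodule ℂ X where
  carrier := {x | ∀ u : Kˣ, τ u x = (χ u : ℂ) • x}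
  zero_mem' := fun u => by simp
  add_mem' {a b} ha hb := fun u => by rw [map_add, ha u, hb u, smul_add]
  smul_mem' c x hx := fun u => by rw [map_smul, hx u]; exact smul_comm c ((χ u : ℂ)) x

@[simp] lemma mem_tEigenT {X : Type*} [AddCommMonoid X] [Module ℂ X]
    (τ : Representation ℂ Kˣ X) (χ : Kˣ →* ℂˣ) (x : X) :
    x ∈ tEigenT τ χ ↔ ∀ u : Kˣ, τ u x = (χ u : ℂ) • x := Iff.rfl

/-- The `χ`-eigenspace `V^{T,χ}` of a `TS`-module. -/
def tEigen (ρ : Rep K V) (χ : Kˣ →* ℂˣ) : Submodule ℂ V := tEigenT (ρ.comp xTHom) χ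

/-- The kernel of the projection to the `S`-coinvariants `V_S`. -/
def sCoinvKer (ρ : Rep K V) : Submodule ℂ V :=
  Submodule.span ℂ {w : V | ∃ (b : K) (v : V), w = ρ (sS b) v - v}

/-- The kernel of the projection to the twisted coinvariants `V_{S,ψ'}`. -/
def sTwistKer (ρ : Rep K V) (ψ' : AddChar K ℂ) : Submodule ℂ V :=
  Submodule.span ℂ {w : V | ∃ (b : K) (v : V), w = ρ (sS b) v - ψ' b • v}

/-- The kernel of the projection to the `χ`-coinvariants `X_{T,χ}` of a `T`-module. -/
def tTwistKerT {X : Type*} [AddCommGroup X] [Module ℂ X]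
    (τ : Representation ℂ Kˣ X) (χ : Kˣ →* ℂˣ) : Submodule ℂ X :=
  Submodule.span ℂ {w : X | ∃ (u : Kˣ) (x : X), w = τ u x - (χ u : ℂ) • x}

/-- The kernel of the projection to the `χ`-coinvariants `V_{T,χ}` of a `TS`-module. -/
def tTwistKer (ρ : Rep K V) (χ : Kˣ →* ℂˣ) : Submodule ℂ V := tTwistKerT (ρ.comp xTHom) χ

lemma sCoinvKer_invariant (ρ : Rep K V) : GRep.Invariant ρ (sCoinvKer ρ) := by
  intro g v hv
  have h : sCoinvKer ρ ≤ Submodule.comap (ρ g) (sCoinvKer ρ) := by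
    refine Submodule.span_le.2 ?_
    rintro w ⟨b, v', rfl⟩
    simp only [SetLike.mem_coe, Submodule.mem_comap, map_sub]
    have h1 : ρ g (ρ (sS b) v') = ρ (sS ((g.t : K) * b)) (ρ g v') := by
      rw [← Module.End.mul_apply, ← map_mul, mul_sS, map_mul, Module.End.mul_apply]
    rw [h1]
    exact Submodule.subset_span ⟨(g.t : K) * b, ρ g v', rfl⟩
  exact h hv

lemma sInv_invariant (ρ : Rep K V) : GRep.Invariant ρ (sInv ρ) := by
  intro g v hv
  rw [mem_sInv] at hv ⊢
  intro b
  have h1 : ρ (sS b) (ρ g v) = ρ g (ρ (sS (((g.t⁻¹ : Kˣ) : K) * b)) v) := by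
    rw [← Module.End.mul_apply, ← map_mul, sS_mul, map_mul, Module.End.mul_apply]
  rw [h1, hv _]

/-- The `S`-coinvariants `π₀(V) = V_S` as a `TS`-module (`S` acting trivially). -/
def piZeroRep (ρ : Rep K V) : Rep K (V ⧸ sCoinvKer ρ) :=
  GRep.quot ρ (sCoinvKer ρ) (sCoinvKer_invariant ρ)

/-- The `S`-coinvariants `π₀(V) = V_S` as a `T`-module. -/
def piZeroT (ρ : Rep K V) : Representation ℂ Kˣ (V ⧸ sCoinvKer ρ) :=
  (piZeroRep ρ).comp xTHom

/-- The `T`-module structure on `κ(V) = V^S`. -/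
def sInvT (ρ : Rep K V) : Representation ℂ Kˣ ↥(sInv ρ) :=
  (GRep.sub ρ (sInv_invariant ρ)).comp xTHom

/-- A `TS`-module is perfect if all its eigenspaces `V^{T,χ}` for smooth `χ` vanish. -/
def Perfect [TopologicalSpace K] (ρ : Rep K V) : Prop :=
  ∀ χ : Kˣ →* ℂˣ, SmoothMulChar χ → tEigen ρ χ = ⊥

/-- A finite-dimensional `T`-module is cyclic if each generalized eigenspace is a single
Jordan block; equivalently all eigenspaces `X^{T,χ}` have dimension at most one. -/
def TCyclic {X : Type*} [AddCommGroup X] [Module ℂ X]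
    (τ : Representation ℂ Kˣ X) : Prop :=
  ∀ χ : Kˣ →* ℂˣ, Module.finrank ℂ ↥(tEigenT τ χ) ≤ 1

lemma sCoinvKer_le_comap (ρ : Rep K V) (σ : Rep K W)
    (f : V →ₗ[ℂ] W) (hf : GRep.Equivariant ρ σ f) :
    sCoinvKer ρ ≤ (sCoinvKer σ).comap f := by
  refine Submodule.span_le.2 ?_
  rintro w ⟨b, v, rfl⟩
  simp only [SetLike.mem_coe, Submodule.mem_comap, map_sub]
  rw [hf]
  exact Submodule.subset_span ⟨b, f v, rfl⟩

/-- The map induced by an equivariant map on the `S`-coinvariants `π₀`. -/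
def piZeroMap (ρ : Rep K V) (σ : Rep K W) (f : V →ₗ[ℂ] W) (hf : GRep.Equivariant ρ σ f) :
    (V ⧸ sCoinvKer ρ) →ₗ[ℂ] (W ⧸ sCoinvKer σ) :=
  Submodule.mapQ _ _ f (sCoinvKer_le_comap ρ σ f hf)

lemma piZeroMap_equivariant (ρ : Rep K V) (σ : Rep K W) (f : V →ₗ[ℂ] W)
    (hf : GRep.Equivariant ρ σ f) :
    GRep.Equivariant (piZeroRep ρ) (piZeroRep σ) (piZeroMap ρ σ f hf) := by
  intro g x
  obtain ⟨v, rfl⟩ := Submodule.Quotient.mk_surjective _ x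
  show piZeroMap ρ σ f hf (piZeroRep ρ g (Submodule.Quotient.mk v))
      = piZeroRep σ g (piZeroMap ρ σ f hf (Submodule.Quotient.mk v))
  rw [show piZeroRep ρ g (Submodule.Quotient.mk v) = Submodule.Quotient.mk (ρ g v) from rfl]
  rw [show piZeroMap ρ σ f hf (Submodule.Quotient.mk v) = Submodule.Quotient.mk (f v) from rfl]
  rw [show piZeroMap ρ σ f hf (Submodule.Quotient.mk (ρ g v))
      = Submodule.Quotient.mk (f (ρ g v)) from rfl]
  rw [show piZeroRep σ g (Submodule.Quotient.mk (f v)) = Submodule.Quotient.mk (σ g (f v)) from rfl]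
  rw [hf]

lemma kappaImg_invariant (ρ : Rep K V) :
    GRep.Invariant (piZeroT ρ) ((sInv ρ).map (sCoinvKer ρ).mkQ) := by
  rintro u w ⟨v, hv, rfl⟩
  refine ⟨ρ (xT u) v, sInv_invariant ρ (xT u) v hv, ?_⟩
  rfl

end RepDefs

/-! ### Composition series and degree. -/

/-- A composition series for a `TS`-module, witnessing finite length: a maximal chain of
invariant submodules (the subquotients are then irreducible). -/
structure CompSeries {K : Type*} [Field K] {V : Type*} [AddCommGroup V] [Module ℂ V]
    (ρ : Rep K V) where
  n : ℕ
  W : ℕ → Submodule ℂ V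
  bot : W 0 = ⊥
  top : W n = ⊤
  inv : ∀ i, GRep.Invariant ρ (W i)
  lt : ∀ i < n, W i < W (i + 1)
  maximal : ∀ i < n, ∀ C : Submodule ℂ V, GRep.Invariant ρ C → W i ≤ C → C ≤ W (i + 1) →
    C = W i ∨ C = W (i + 1)

/-- The number of Jordan–Hölder constituents of a composition series isomorphic to a given
representation `σ` (applied with `σ = 𝕊`, this is the degree). -/
def CompSeries.deg {K : Type*} [Field K] {V : Type*} [AddCommGroup V] [Module ℂ V]
    {ρ : Rep K V} (c : CompSeries ρ) {W₀ : Type*} [AddCommMonoid W₀] [Module ℂ W₀]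
    (σ : Representation ℂ (Aff K) W₀) : ℕ :=
  (Finset.univ.filter fun i : Fin c.n =>
    GRep.Iso (GRep.subquot ρ (c.inv i.1) (c.inv (i.1 + 1))) σ).card

/-! ### Fiber products of a `T`-module with a `TS`-module over a `T`-module. -/

section Fiber

open Aff

variable {K : Type*} [Field K]
variable {X Y E : Type*} [AddCommGroup X] [Module ℂ X] [AddCommGroup Y] [Module ℂ Y]
  [AddCommGroup E] [Module ℂ E]

/-- The product `TS`-module `X × E` where `S` acts trivially on the `T`-module `X`. -/
def prodRepTE (τ : Representation ℂ Kˣ X) (ρ : Rep K E) : Rep K (X × E) where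
  toFun g := (τ g.t).prodMap (ρ g)
  map_one' := by
    apply LinearMap.ext; rintro ⟨x, v⟩
    simp
  map_mul' g h := by
    apply LinearMap.ext; rintro ⟨x, v⟩
    simp [map_mul]

/-- The underlying space of the fiber product `𝔼[f] = X ×_Y E`. -/
def fiberKer (f : X →ₗ[ℂ] Y) (q : E →ₗ[ℂ] Y) : Submodule ℂ (X × E) :=
  LinearMap.ker (f.comp (LinearMap.fst ℂ X E) - q.comp (LinearMap.snd ℂ X E))

lemma mem_fiberKer (f : X →ₗ[ℂ] Y) (q : E →ₗ[ℂ] Y) (p : X × E) :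
    p ∈ fiberKer f q ↔ f p.1 = q p.2 := by
  simp [fiberKer, sub_eq_zero]

lemma fiber_invariant (τX : Representation ℂ Kˣ X) (ρE : Rep K E)
    (τY : Representation ℂ Kˣ Y) (f : X →ₗ[ℂ] Y) (q : E →ₗ[ℂ] Y)
    (hf : ∀ (u : Kˣ) (x : X), f (τX u x) = τY u (f x))
    (hq : sCoinvKer ρE ≤ LinearMap.ker q)
    (hqT : ∀ (u : Kˣ) (v : E), q (ρE (xT u) v) = τY u (q v)) :
    GRep.Invariant (prodRepTE τX ρE) (fiberKer f q) := by
  intro g p hp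
  rw [mem_fiberKer] at hp ⊢
  have hsb : q (ρE (sS (((g.t⁻¹ : Kˣ) : K) * g.s)) p.2) = q p.2 := by
    have h1 : ρE (sS (((g.t⁻¹ : Kˣ) : K) * g.s)) p.2 - p.2 ∈ sCoinvKer ρE :=
      Submodule.subset_span ⟨_, _, rfl⟩
    have h2 := hq h1
    rw [LinearMap.mem_ker, map_sub, sub_eq_zero] at h2
    exact h2
  have hdecomp : ρE g p.2 = ρE (xT g.t) (ρE (sS (((g.t⁻¹ : Kˣ) : K) * g.s)) p.2) := by
    conv_lhs => rw [aff_decomp g]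
    rw [map_mul, Module.End.mul_apply]
  have h1 : ((prodRepTE τX ρE) g p).1 = τX g.t p.1 := rfl
  have h2 : ((prodRepTE τX ρE) g p).2 = ρE g p.2 := rfl
  rw [h1, h2, hf, hp, hdecomp, hqT, hsb]

end Fiber

/-! ### Jordan blocks of finite-dimensional `T`-modules. -/

section Jordan

variable {K : Type*} [Field K]
variable {X : Type*} [AddCommGroup X] [Module ℂ X]

/-- A Jordan block of a `T`-module: a nonzero indecomposable invariant direct summand. -/
def IsJordanBlock (τ : Representation ℂ Kˣ X) (J : Submodule ℂ X) : Prop :=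
  J ≠ ⊥ ∧ GRep.Invariant τ J ∧ (∃ C : Submodule ℂ X, GRep.Invariant τ C ∧ IsCompl J C) ∧
    ∀ A B : Submodule ℂ X, GRep.Invariant τ A → GRep.Invariant τ B → A ≤ J → B ≤ J →
      A ⊓ B = ⊥ → A ⊔ B = J → A = ⊥ ∨ B = ⊥

end Jordan

/-! ### Invariants and coinvariants for a normal subgroup of an arbitrary group. -/

section Grp

variable {Γ : Type*} [Group Γ]
variable {V W : Type*} [AddCommGroup V] [Module ℂ V] [AddCommGroup W] [Module ℂ W]

/-- Invariants `V^N` under a subgroup `N`. -/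
def grpInv (ρ : Representation ℂ Γ V) (N : Subgroup Γ) : Submodule ℂ V where
  carrier := {v | ∀ n ∈ N, ρ n v = v}
  zero_mem' := fun n _ => map_zero _
  add_mem' {a b} ha hb := fun n hn => by rw [map_add, ha n hn, hb n hn]
  smul_mem' c v hv := fun n hn => by rw [map_smul, hv n hn]

@[simp] lemma mem_grpInv (ρ : Representation ℂ Γ V) (N : Subgroup Γ) (v : V) :
    v ∈ grpInv ρ N ↔ ∀ n ∈ N, ρ n v = v := Iff.rfl

/-- The kernel of the projection to the coinvariants `V_N` under a subgroup `N`. -/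
def grpCoinvKer (ρ : Representation ℂ Γ V) (N : Subgroup Γ) : Submodule ℂ V :=
  Submodule.span ℂ {w : V | ∃ n ∈ N, ∃ v : V, w = ρ n v - v}

lemma grpInv_invariant (ρ : Representation ℂ Γ V) (N : Subgroup Γ) [hN : N.Normal] :
    GRep.Invariant ρ (grpInv ρ N) := by
  intro γ v hv
  rw [mem_grpInv] at hv ⊢
  intro n hn
  have hmem : γ⁻¹ * n * γ ∈ N := by
    have := hN.conj_mem n hn γ⁻¹
    simpa using this
  have key : ρ n (ρ γ v) = ρ γ (ρ (γ⁻¹ * n * γ) v) := by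
    rw [← Module.End.mul_apply, ← map_mul, ← Module.End.mul_apply, ← map_mul]
    congr 1
    group
  rw [key, hv _ hmem]

lemma grpCoinvKer_invariant (ρ : Representation ℂ Γ V) (N : Subgroup Γ) [hN : N.Normal] :
    GRep.Invariant ρ (grpCoinvKer ρ N) := by
  intro γ v hv
  have h : grpCoinvKer ρ N ≤ Submodule.comap (ρ γ) (grpCoinvKer ρ N) := by
    refine Submodule.span_le.2 ?_
    rintro w ⟨n, hn, v', rfl⟩
    simp only [SetLike.mem_coe, Submodule.mem_comap, map_sub]
    have key : ρ γ (ρ n v') = ρ (γ * n * γ⁻¹) (ρ γ v') := by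
      rw [← Module.End.mul_apply, ← map_mul, ← Module.End.mul_apply, ← map_mul]
      congr 1
      group
    rw [key]
    exact Submodule.subset_span ⟨γ * n * γ⁻¹, hN.conj_mem n hn γ, ρ γ v', rfl⟩
  exact h hv

/-- The map induced on `N`-invariants by an equivariant map. -/
def grpInvRestrict (ρ : Representation ℂ Γ V) (σ : Representation ℂ Γ W) (N : Subgroup Γ)
    (f : V →ₗ[ℂ] W) (hf : GRep.Equivariant ρ σ f) : ↥(grpInv ρ N) →ₗ[ℂ] ↥(grpInv σ N) :=
  f.restrict (fun v hv => by
    rw [mem_grpInv] at hv ⊢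
    intro n hn
    rw [← hf n v, hv n hn])

lemma grpCoinvKer_le_comap (ρ : Representation ℂ Γ V) (σ : Representation ℂ Γ W) (N : Subgroup Γ)
    (f : V →ₗ[ℂ] W) (hf : GRep.Equivariant ρ σ f) :
    grpCoinvKer ρ N ≤ (grpCoinvKer σ N).comap f := by
  refine Submodule.span_le.2 ?_
  rintro w ⟨n, hn, v, rfl⟩
  simp only [SetLike.mem_coe, Submodule.mem_comap, map_sub]
  rw [hf]
  exact Submodule.subset_span ⟨n, hn, f v, rfl⟩

/-- The map induced on `N`-coinvariants by an equivariant map. -/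
def grpCoinvMap (ρ : Representation ℂ Γ V) (σ : Representation ℂ Γ W) (N : Subgroup Γ)
    (f : V →ₗ[ℂ] W) (hf : GRep.Equivariant ρ σ f) :
    (V ⧸ grpCoinvKer ρ N) →ₗ[ℂ] (W ⧸ grpCoinvKer σ N) :=
  Submodule.mapQ _ _ f (grpCoinvKer_le_comap ρ σ N f hf)

end Grp

/-! ### Tate L-factors of finite-dimensional `T`-modules. -/

section Lfactor

variable {K : Type*} [NontriviallyNormedField K]
variable {X : Type*} [AddCommGroup X] [Module ℂ X]

/-- The part of a `T`-module where the `χ`-twisted action is unramified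
(trivial on the norm-one units). -/
def unrPart (τ : Representation ℂ Kˣ X) (χ : Kˣ →* ℂˣ) : Submodule ℂ X where
  carrier := {x | ∀ u : Kˣ, ‖(u : K)‖ = 1 → (χ u : ℂ) • τ u x = x}
  zero_mem' := fun u _ => by simp
  add_mem' {a b} ha hb := fun u hu => by rw [map_add, smul_add, ha u hu, hb u hu]
  smul_mem' c x hx := fun u hu => by
    rw [map_smul, smul_comm, hx u hu]

lemma unrPart_stable (τ : Representation ℂ Kˣ X) (χ : Kˣ →* ℂˣ) (ϖ : Kˣ) :
    ∀ x ∈ unrPart τ χ, ((χ ϖ : ℂ) • τ ϖ) x ∈ unrPart τ χ := by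
  intro x hx u hu
  have comm : τ u (τ ϖ x) = τ ϖ (τ u x) := by
    rw [← Module.End.mul_apply, ← map_mul, mul_comm, map_mul, Module.End.mul_apply]
  calc (χ u : ℂ) • τ u (((χ ϖ : ℂ) • τ ϖ) x)
      = (χ ϖ : ℂ) • ((χ u : ℂ) • τ u (τ ϖ x)) := by
        rw [LinearMap.smul_apply, map_smul, smul_comm]
    _ = (χ ϖ : ℂ) • τ ϖ ((χ u : ℂ) • τ u x) := by rw [comm, map_smul]
    _ = ((χ ϖ : ℂ) • τ ϖ) x := by rw [hx u hu, LinearMap.smul_apply]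

/-- The twisted uniformizer action on the unramified part. -/
def twistOp (τ : Representation ℂ Kˣ X) (χ : Kˣ →* ℂˣ) (ϖ : Kˣ) :
    ↥(unrPart τ χ) →ₗ[ℂ] ↥(unrPart τ χ) :=
  LinearMap.restrict ((χ ϖ : ℂ) • τ ϖ) (unrPart_stable τ χ ϖ)

/-- The Tate `L`-factor `L(s, χ ⊗ X) = det(1 - q^{-s}·(χ·τ)(ϖ) | X^{unr,χ})⁻¹` of a
(finite-dimensional) `T`-module `X`, relative to a uniformizer `ϖ`. -/
def Lfactor (τ : Representation ℂ Kˣ X) (χ : Kˣ →* ℂˣ) (ϖ : Kˣ) (s : ℂ) : ℂ :=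
  (LinearMap.det (LinearMap.id - (‖(ϖ : K)‖ : ℂ) ^ s • twistOp τ χ ϖ))⁻¹

end Lfactor

/-! ### The concrete `TS`-modules `𝕊`, `C_c^∞(k)`, `C_b^∞(k^×)` and `𝔼[χ]`. -/

section Concrete

open Aff

variable (K : Type*) [NontriviallyNormedField K]

/-- The representation of `TS` on functions on `k^×`:
`(s_b g)(x) = ψ(bx) g(x)`, `(x_λ g)(x) = g(xλ)`. -/
def repCx (ψ : AddChar K ℂ) : Rep K (Kˣ → ℂ) where
  toFun g :=
    { toFun := fun f x => ψ (g.s * (x : K)) * f (x * g.t)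
      map_add' := fun f₁ f₂ => by funext x; simp [mul_add]
      map_smul' := fun c f => by
        funext x
        simp only [Pi.smul_apply, smul_eq_mul, RingHom.id_apply]
        ring }
  map_one' := by
    apply LinearMap.ext; intro f; funext x
    simp
  map_mul' g h := by
    apply LinearMap.ext; intro f; funext x
    show ψ ((g.s + (g.t : K) * h.s) * (x : K)) * f (x * (g.t * h.t))
        = ψ (g.s * (x : K)) * (ψ (h.s * ((x * g.t : Kˣ) : K)) * f (x * g.t * h.t))
    have harg : (g.s + (g.t : K) * h.s) * (x : K)
        = g.s * (x : K) + h.s * ((x * g.t : Kˣ) : K) := by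
      push_cast
      ring
    rw [harg, AddChar.map_add_eq_mul, ← mul_assoc x g.t h.t]
    ring

@[simp] lemma repCx_apply (ψ : AddChar K ℂ) (g : Aff K) (f : Kˣ → ℂ) (x : Kˣ) :
    repCx K ψ g f x = ψ (g.s * (x : K)) * f (x * g.t) := rfl

/-- The `χ`-twisted representation of `TS` on functions on `k`:
`(s_b g)(x) = ψ(bx) g(x)`, `(x_λ g)(x) = χ(λ) g(xλ)`.  (Take `χ = 1` for the
untwisted action on `C_c^∞(k)`; the module `𝔼[χ]` is `C_c^∞(k)` with the twisted action.) -/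
def repCc (ψ : AddChar K ℂ) (χ : Kˣ →* ℂˣ) : Rep K (K → ℂ) where
  toFun g :=
    { toFun := fun f x => (χ g.t : ℂ) * ψ (g.s * x) * f (x * (g.t : K))
      map_add' := fun f₁ f₂ => by funext x; simp [mul_add]
      map_smul' := fun c f => by
        funext x
        simp only [Pi.smul_apply, smul_eq_mul, RingHom.id_apply]
        ring }
  map_one' := by
    apply LinearMap.ext; intro f; funext x
    simp
  map_mul' g h := by
    apply LinearMap.ext; intro f; funext x
    show (χ (g.t * h.t) : ℂ) * ψ ((g.s + (g.t : K) * h.s) * x) * f (x * ((g.t * h.t : Kˣ) : K))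
        = (χ g.t : ℂ) * ψ (g.s * x) * ((χ h.t : ℂ) * ψ (h.s * (x * (g.t : K)))
            * f (x * (g.t : K) * (h.t : K)))
    have harg : (g.s + (g.t : K) * h.s) * x = g.s * x + h.s * (x * (g.t : K)) := by ring
    have harg2 : x * ((g.t * h.t : Kˣ) : K) = x * (g.t : K) * (h.t : K) := by
      push_cast
      ring
    rw [harg, harg2, AddChar.map_add_eq_mul, map_mul]
    push_cast
    ring

@[simp] lemma repCc_apply (ψ : AddChar K ℂ) (χ : Kˣ →* ℂˣ) (g : Aff K) (f : K → ℂ) (x : K) :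
    repCc K ψ χ g f x = (χ g.t : ℂ) * ψ (g.s * x) * f (x * (g.t : K)) := rfl

/-- The one-dimensional `TS`-module `ℂ_χ` on which `S` acts trivially and `x_λ` by `χ(λ)`. -/
def chiRep (χ : Kˣ →* ℂˣ) : Rep K ℂ where
  toFun g := (χ g.t : ℂ) • LinearMap.id
  map_one' := by
    apply LinearMap.ext; intro c
    simp
  map_mul' g h := by
    apply LinearMap.ext; intro c
    simp only [mul_t, map_mul, LinearMap.smul_apply, LinearMap.id_apply, Module.End.mul_apply,
      Units.val_mul, smul_eq_mul]
    ring

/-- `C_c^∞(k)`: locally constant, compactly supported functions on `k`. -/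
def CcK : Submodule ℂ (K → ℂ) where
  carrier := {f | IsLocallyConstant f ∧ HasCompactSupport f}
  zero_mem' := ⟨IsLocallyConstant.const 0, by
    rw [hasCompactSupport_def]
    simp⟩
  add_mem' {a b} ha hb := ⟨ha.1.comp₂ hb.1 (· + ·), ha.2.add hb.2⟩
  smul_mem' c f hf := by
    refine ⟨?_, hf.2.mono (Function.support_const_smul_subset c f)⟩
    exact hf.1.comp (fun z => c * z)

@[simp] lemma mem_CcK (f : K → ℂ) :
    f ∈ CcK K ↔ IsLocallyConstant f ∧ HasCompactSupport f := Iff.rfl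

/-- `𝕊 = C_c^∞(k^×)`: locally constant, compactly supported functions on `k^×`. -/
def SSx : Submodule ℂ (Kˣ → ℂ) where
  carrier := {f | IsLocallyConstant f ∧ HasCompactSupport f}
  zero_mem' := ⟨IsLocallyConstant.const 0, by
    rw [hasCompactSupport_def]
    simp⟩
  add_mem' {a b} ha hb := ⟨ha.1.comp₂ hb.1 (· + ·), ha.2.add hb.2⟩
  smul_mem' c f hf := by
    refine ⟨?_, hf.2.mono (Function.support_const_smul_subset c f)⟩
    exact hf.1.comp (fun z => c * z)

@[simp] lemma mem_SSx (f : Kˣ → ℂ) :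
    f ∈ SSx K ↔ IsLocallyConstant f ∧ HasCompactSupport f := Iff.rfl

/-- `C_b^∞(k^×)`: locally constant functions on `k^×` whose support has compact closure
in `k`. -/
def Cb : Submodule ℂ (Kˣ → ℂ) where
  carrier := {f | IsLocallyConstant f ∧
    IsCompact (closure (((↑) : Kˣ → K) '' Function.support f))}
  zero_mem' := ⟨IsLocallyConstant.const 0, by simp⟩
  add_mem' {a b} ha hb := by
    refine ⟨ha.1.comp₂ hb.1 (· + ·), ?_⟩
    refine IsCompact.of_isClosed_subset (ha.2.union hb.2) isClosed_closure ?_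
    refine closure_minimal ?_ (ha.2.isClosed.union hb.2.isClosed)
    refine (Set.image_mono (Function.support_add _ _)).trans ?_
    rw [Set.image_union]
    exact Set.union_subset_union subset_closure subset_closure
  smul_mem' c f hf := by
    refine ⟨hf.1.comp (fun z => c * z), ?_⟩
    refine IsCompact.of_isClosed_subset hf.2 isClosed_closure ?_
    refine closure_mono ?_
    exact Set.image_mono (Function.support_const_smul_subset c f)

@[simp] lemma mem_Cb (f : Kˣ → ℂ) :
    f ∈ Cb K ↔ IsLocallyConstant f ∧
      IsCompact (closure (((↑) : Kˣ → K) '' Function.support f)) := Iff.rfl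

variable {K}

lemma SSx_invariant (ψ : AddChar K ℂ) (hψlc : IsLocallyConstant (⇑ψ)) :
    GRep.Invariant (repCx K ψ) (SSx K) := by
  rintro g f hf
  rw [mem_SSx] at hf ⊢
  obtain ⟨hlc, hcs⟩ := hf
  have heq : repCx K ψ g f
      = (fun x : Kˣ => ψ (g.s * (x : K))) * (f ∘ (Homeomorph.mulRight g.t)) := rfl
  constructor
  · rw [heq]
    refine IsLocallyConstant.mul ?_ ?_
    · exact hψlc.comp_continuous (continuous_const.mul Units.continuous_val)
    · exact hlc.comp_continuous (Homeomorph.mulRight g.t).continuous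
  · rw [heq]
    exact (hcs.comp_homeomorph (Homeomorph.mulRight g.t)).mul_left

lemma CcK_invariant (ψ : AddChar K ℂ) (hψlc : IsLocallyConstant (⇑ψ)) (χ : Kˣ →* ℂˣ) :
    GRep.Invariant (repCc K ψ χ) (CcK K) := by
  rintro g f hf
  rw [mem_CcK] at hf ⊢
  obtain ⟨hlc, hcs⟩ := hf
  have hne : ((g.t : Kˣ) : K) ≠ 0 := g.t.ne_zero
  have heq : repCc K ψ χ g f
      = (fun x : K => (χ g.t : ℂ) * ψ (g.s * x)) * (f ∘ (Homeomorph.mulRight₀ (g.t : K) hne)) :=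
    rfl
  constructor
  · rw [heq]
    refine IsLocallyConstant.mul ?_ ?_
    · exact ((hψlc.comp_continuous (continuous_const.mul continuous_id)).comp
        (fun z => (χ g.t : ℂ) * z))
    · exact hlc.comp_continuous (Homeomorph.mulRight₀ (g.t : K) hne).continuous
  · rw [heq]
    exact (hcs.comp_homeomorph (Homeomorph.mulRight₀ (g.t : K) hne)).mul_left

/-- The `TS`-module `𝕊 = C_c^∞(k^×)`. -/
def SRep (ψ : AddChar K ℂ) (hψlc : IsLocallyConstant (⇑ψ)) : Rep K ↥(SSx K) :=
  GRep.sub (repCx K ψ) (SSx_invariant ψ hψlc)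

/-- The `TS`-module `𝔼[χ]`, i.e. `C_c^∞(k)` with the `χ`-twisted action. -/
def ERep (ψ : AddChar K ℂ) (hψlc : IsLocallyConstant (⇑ψ)) (χ : Kˣ →* ℂˣ) : Rep K ↥(CcK K) :=
  GRep.sub (repCc K ψ χ) (CcK_invariant ψ hψlc χ)

/-- The `TS`-module `𝕊^s`, a direct sum of `s` copies of `𝕊`. -/
def SRepPow (ψ : AddChar K ℂ) (hψlc : IsLocallyConstant (⇑ψ)) (s : ℕ) :
    Rep K (Fin s → ↥(SSx K)) where
  toFun g := LinearMap.pi fun i => (SRep ψ hψlc g).comp (LinearMap.proj i)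
  map_one' := by
    apply LinearMap.ext; intro v; funext i
    simp
  map_mul' g h := by
    apply LinearMap.ext; intro v; funext i
    simp [map_mul]

/-- The submodule `E` of `C_b^∞(k^×)` consisting of functions which are `χ`-eigenvectors
modulo `𝕊`; the quotient `E/𝕊` is the `χ`-eigenspace of `C_b^∞(k^×)/𝕊`. -/
def quotEigen (ψ : AddChar K ℂ) (χ : Kˣ →* ℂˣ) : Submodule ℂ (Kˣ → ℂ) where
  carrier := {f | f ∈ Cb K ∧ ∀ u : Kˣ, repCx K ψ (Aff.xT u) f - (χ u : ℂ) • f ∈ SSx K}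
  zero_mem' := ⟨(Cb K).zero_mem, fun u => by simpa using (SSx K).zero_mem⟩
  add_mem' {a b} ha hb := by
    refine ⟨(Cb K).add_mem ha.1 hb.1, fun u => ?_⟩
    rw [map_add, smul_add, add_sub_add_comm]
    exact (SSx K).add_mem (ha.2 u) (hb.2 u)
  smul_mem' c f hf := by
    refine ⟨(Cb K).smul_mem c hf.1, fun u => ?_⟩
    rw [map_smul, smul_comm, ← smul_sub]
    exact (SSx K).smul_mem c (hf.2 u)

/-- Evaluation at `0 ∈ k`, realizing the quotient map `𝔼[χ] → ℂ_χ` with kernel `𝕊`. -/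
def ev0 : ↥(CcK K) →ₗ[ℂ] ℂ where
  toFun f := (f : K → ℂ) 0
  map_add' f g := rfl
  map_smul' c f := rfl

end Concrete

/-! ### The diagonal torus in GL(2). -/

section GL2

variable {K : Type*} [Field K]

/-- The diagonal element `diag(a, b)` of `GL(2, K)`. -/
def diagGL (a b : Kˣ) : Matrix.GeneralLinearGroup (Fin 2) K where
  val := Matrix.diagonal ![(a : K), (b : K)]
  inv := Matrix.diagonal ![((a : K))⁻¹, ((b : K))⁻¹]
  val_inv := by
    ext i j
    fin_cases i <;> fin_cases j <;>
      simp [Matrix.mul_apply, Fin.sum_univ_two, Matrix.diagonal, Matrix.one_apply,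
        a.ne_zero, b.ne_zero]
  inv_val := by
    ext i j
    fin_cases i <;> fin_cases j <;>
      simp [Matrix.mul_apply, Fin.sum_univ_two, Matrix.diagonal, Matrix.one_apply,
        a.ne_zero, b.ne_zero]

end GL2

/-! ### Group algebra action: generalities -/

section GroupAlg

variable {G : Type*} [CommMonoid G]
variable {X Y : Type*} [AddCommGroup X] [Module ℂ X] [AddCommGroup Y] [Module ℂ Y]

/-- The action of the group algebra. -/
def act (τ : Representation ℂ G X) : MonoidAlgebra ℂ G →ₐ[ℂ] Module.End ℂ X :=
  MonoidAlgebra.lift ℂ (Module.End ℂ X) G τ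

/-- Evaluation of a group algebra element at a character. -/
def evc (θ : G →* ℂ) : MonoidAlgebra ℂ G →ₐ[ℂ] ℂ := MonoidAlgebra.lift ℂ ℂ G θ

@[simp] lemma act_of (τ : Representation ℂ G X) (g : G) :
    act τ (MonoidAlgebra.of ℂ G g) = τ g := MonoidAlgebra.lift_of _ _

@[simp] lemma evc_of (θ : G →* ℂ) (g : G) :
    evc θ (MonoidAlgebra.of ℂ G g) = θ g := MonoidAlgebra.lift_of _ _

/-- Kernel of the twisted coinvariants. -/
def twKer (τ : Representation ℂ G X) (θ : G →* ℂ) : Submodule ℂ X :=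
  Submodule.span ℂ {w : X | ∃ (g : G) (x : X), w = τ g x - θ g • x}

lemma act_sub_mem (τ : Representation ℂ G X) (θ : G →* ℂ) (α : MonoidAlgebra ℂ G) (x : X) :
    act τ α x - evc θ α • x ∈ twKer τ θ := by
  induction α using MonoidAlgebra.induction_on with
  | of g => rw [act_of, evc_of]; exact Submodule.subset_span ⟨g, x, rfl⟩
  | add a b ha hb =>
    have := Submodule.add_mem _ ha hb
    rw [map_add, map_add, LinearMap.add_apply, add_smul]
    convert this using 1
    abel
  | smul r a ha =>
    have := Submodule.smul_mem _ r ha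
    rw [map_smul, map_smul, LinearMap.smul_apply, smul_assoc, ← smul_sub]
    exact this

lemma mem_twKer_of (τ : Representation ℂ G X) (θ : G →* ℂ) {α : MonoidAlgebra ℂ G} {x : X}
    (h : act τ α x = 0) (h' : evc θ α ≠ 0) : x ∈ twKer τ θ := by
  have := act_sub_mem τ θ α x
  rw [h, zero_sub, Submodule.neg_mem_iff] at this
  exact (Submodule.smul_mem_iff _ h').1 this

lemma act_eigen (τ : Representation ℂ G X) (θ : G →* ℂ) {x : X}
    (h : ∀ g, τ g x = θ g • x) (α : MonoidAlgebra ℂ G) : act τ α x = evc θ α • x := by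
  induction α using MonoidAlgebra.induction_on with
  | of g => rw [act_of, evc_of, h]
  | add a b ha hb => rw [map_add, map_add, LinearMap.add_apply, add_smul, ha, hb]
  | smul r a ha => rw [map_smul, map_smul, LinearMap.smul_apply, smul_assoc, ha]

lemma act_equivariant (τ : Representation ℂ G X) (σ : Representation ℂ G Y) (f : X →ₗ[ℂ] Y)
    (h : ∀ g x, f (τ g x) = σ g (f x)) (α : MonoidAlgebra ℂ G) (x : X) :
    f (act τ α x) = act σ α (f x) := by
  induction α using MonoidAlgebra.induction_on with
  | of g => rw [act_of, act_of, h]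
  | add a b ha hb => rw [map_add, map_add, LinearMap.add_apply, map_add, LinearMap.add_apply,
      ha, hb]
  | smul r a ha => rw [map_smul, map_smul, LinearMap.smul_apply, map_smul, LinearMap.smul_apply,
      ha]

lemma act_functional (τ : Representation ℂ G X) (θ : G →* ℂ) (l : X →ₗ[ℂ] ℂ)
    (h : ∀ g x, l (τ g x) = θ g * l x) (α : MonoidAlgebra ℂ G) (x : X) :
    l (act τ α x) = evc θ α * l x := by
  induction α using MonoidAlgebra.induction_on with
  | of g => rw [act_of, evc_of, h]
  | add a b ha hb => rw [map_add, map_add, LinearMap.add_apply, map_add, add_mul, ha, hb]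
  | smul r a ha => rw [map_smul, map_smul, LinearMap.smul_apply, map_smul, ha, smul_eq_mul,
      smul_eq_mul, mul_assoc]

lemma act_mem (τ : Representation ℂ G X) (U : Submodule ℂ X) (hU : ∀ g x, x ∈ U → τ g x ∈ U)
    (α : MonoidAlgebra ℂ G) {x : X} (hx : x ∈ U) : act τ α x ∈ U := by
  induction α using MonoidAlgebra.induction_on with
  | of g => rw [act_of]; exact hU g x hx
  | add a b ha hb => rw [map_add, LinearMap.add_apply]; exact U.add_mem ha hb
  | smul r a ha => rw [map_smul, LinearMap.smul_apply]; exact U.smul_mem r ha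

lemma exists_of_mem_twKer (τ : Representation ℂ G X) (θ : G →* ℂ)
    (hfin : ∀ g x, ∃ M : ℕ, 0 < M ∧ τ (g ^ M) x = x ∧ θ (g ^ M) = 1) {x : X}
    (hx : x ∈ twKer τ θ) : ∃ α, act τ α x = 0 ∧ evc θ α ≠ 0 := by
  induction hx using Submodule.span_induction with
  | mem w hw =>
    obtain ⟨g, x, rfl⟩ := hw
    obtain ⟨M, hM, h1, h2⟩ := hfin g x
    set s := MonoidAlgebra.of ℂ G g
    set t := algebraMap ℂ (MonoidAlgebra ℂ G) (θ g)
    refine ⟨∑ i ∈ Finset.range M, s ^ i * t ^ (M - 1 - i), ?_, ?_⟩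
    · have h3 : τ g x - θ g • x = act τ (s - t) x := by
        rw [map_sub, act_of, AlgHom.commutes, LinearMap.sub_apply, Module.algebraMap_end_apply]
      rw [h3, ← Module.End.mul_apply, ← map_mul, (Commute.all s t).geom_sum₂_mul, map_sub,
        map_pow, map_pow, act_of, AlgHom.commutes, LinearMap.sub_apply, ← map_pow, h1, ← map_pow,
        ← map_pow, h2, Module.algebraMap_end_apply, one_smul, sub_self]
    · have h4 : ∀ i ∈ Finset.range M, evc θ (s ^ i * t ^ (M - 1 - i)) = θ g ^ (M - 1) := by
        intro i hi
        rw [Finset.mem_range] at hi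
        rw [map_mul, map_pow, map_pow, evc_of, AlgHom.commutes, Algebra.algebraMap_self,
          RingHom.id_apply, ← pow_add]
        congr 1; omega
      rw [map_sum, Finset.sum_congr rfl h4, Finset.sum_const, Finset.card_range, nsmul_eq_mul]
      have h5 : θ g ≠ 0 := by
        intro h0
        rw [map_pow, h0, zero_pow hM.ne'] at h2
        exact zero_ne_one h2
      exact mul_ne_zero (by exact_mod_cast hM.ne') (pow_ne_zero _ h5)
  | zero => exact ⟨1, by simp, by simp⟩
  | add x y _ _ hx hy =>
    obtain ⟨a, ha, ha'⟩ := hx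
    obtain ⟨b, hb, hb'⟩ := hy
    refine ⟨a * b, ?_, by rw [map_mul]; exact mul_ne_zero ha' hb'⟩
    rw [map_add]
    nth_rewrite 1 [mul_comm a b]
    rw [map_mul, map_mul, Module.End.mul_apply, Module.End.mul_apply, ha, hb]; simp
  | smul c x _ hx =>
    obtain ⟨a, ha, ha'⟩ := hx
    exact ⟨a, by rw [map_smul, ha, smul_zero], ha'⟩

def annI (τ : Representation ℂ G X) (x : X) : Ideal (MonoidAlgebra ℂ G) where
  carrier := {α | act τ α x = 0}
  zero_mem' := by simp
  add_mem' {a b} ha hb := by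
    simp only [Set.mem_ofPred_eq] at *
    rw [map_add, LinearMap.add_apply, ha, hb, add_zero]
  smul_mem' c a ha := by
    simp only [Set.mem_ofPred_eq] at *
    rw [smul_eq_mul, map_mul, Module.End.mul_apply, ha, map_zero]

lemma mem_annI (τ : Representation ℂ G X) (x : X) (α) : α ∈ annI τ x ↔ act τ α x = 0 := Iff.rfl

/-- A nonzero vector on which every group element has finite order supports a character. -/
lemma exists_char (τ : Representation ℂ G X) {x : X} (hx : x ≠ 0)
    (hfin : ∀ g, ∃ M : ℕ, 0 < M ∧ τ (g ^ M) x = x) :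
    ∃ θ : G →* ℂ, ∀ α, act τ α x = 0 → evc θ α = 0 := by
  have hne : annI τ x ≠ ⊤ := by
    intro h
    have : (1 : MonoidAlgebra ℂ G) ∈ annI τ x := h ▸ Submodule.mem_top
    rw [mem_annI, map_one] at this
    exact hx this
  obtain ⟨m, hm, hle⟩ := Ideal.exists_le_maximal _ hne
  have hdom : IsDomain (MonoidAlgebra ℂ G ⧸ m) := Ideal.Quotient.isDomain m
  have hintegral : Algebra.IsIntegral ℂ (MonoidAlgebra ℂ G ⧸ m) := by
    constructor
    intro y
    obtain ⟨a, rfl⟩ := Ideal.Quotient.mkₐ_surjective ℂ m y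
    induction a using MonoidAlgebra.induction_on with
    | of g =>
      obtain ⟨M, hM, h1⟩ := hfin g
      refine IsIntegral.of_pow hM ?_
      have : (MonoidAlgebra.of ℂ G g) ^ M - 1 ∈ m := by
        apply hle
        rw [mem_annI, map_sub, ← map_pow, act_of, map_one, LinearMap.sub_apply, h1]
        simp
      rw [← map_pow]
      have h2 : (Ideal.Quotient.mkₐ ℂ m) ((MonoidAlgebra.of ℂ G g) ^ M) = 1 := by
        rw [← map_one (Ideal.Quotient.mkₐ ℂ m)]
        exact Ideal.Quotient.eq.2 this
      rw [h2]; exact isIntegral_one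
    | add a b ha hb => rw [map_add]; exact ha.add hb
    | smul r a ha => rw [map_smul]; exact ha.smul r
  have hbij := IsAlgClosed.algebraMap_bijective_of_isIntegral (k := ℂ)
    (K := MonoidAlgebra ℂ G ⧸ m)
  let e : ℂ ≃ₐ[ℂ] (MonoidAlgebra ℂ G ⧸ m) := AlgEquiv.ofBijective (Algebra.ofId ℂ _) hbij
  let F : MonoidAlgebra ℂ G →ₐ[ℂ] ℂ := (e.symm : _ →ₐ[ℂ] ℂ).comp (Ideal.Quotient.mkₐ ℂ m)
  refine ⟨(MonoidAlgebra.lift ℂ ℂ G).symm F, fun α hα => ?_⟩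
  rw [evc, Equiv.apply_symm_apply]
  have : α ∈ m := hle hα
  show e.symm (Ideal.Quotient.mkₐ ℂ m α) = 0
  have h3 : Ideal.Quotient.mkₐ ℂ m α = 0 := Ideal.Quotient.eq_zero_iff_mem.2 this
  rw [h3, map_zero]

/-- Irreducible representations of an essentially finitely generated abelian group are finite
dimensional. -/
lemma finite_of_irred (τ : Representation ℂ G X) (hirr : GRep.Irred τ) (F : Finset G)
    (hF : ∀ g : G, ∃ h ∈ Submonoid.closure (F : Set G), τ g = τ h) : Module.Finite ℂ X := by
  obtain ⟨hnt, hirr⟩ := hirr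
  obtain ⟨v, hv⟩ := exists_ne (0 : X)
  have hgen : ∀ w : X, w ≠ 0 → ∀ y : X, ∃ a, act τ a w = y := by
    intro w hw y
    let L : MonoidAlgebra ℂ G →ₗ[ℂ] X := (LinearMap.applyₗ w).comp (act τ).toLinearMap
    have hL : ∀ a, L a = act τ a w := fun a => rfl
    have hinv : GRep.Invariant τ (LinearMap.range L) := by
      rintro g _ ⟨a, rfl⟩
      refine ⟨MonoidAlgebra.of ℂ G g * a, ?_⟩
      rw [hL, hL, map_mul, act_of, Module.End.mul_apply]
    rcases hirr _ hinv with h | h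
    · exfalso
      apply hw
      have : L 1 ∈ LinearMap.range L := ⟨1, rfl⟩
      rw [h, Submodule.mem_bot, hL, map_one] at this
      exact this
    · have : y ∈ LinearMap.range L := h ▸ Submodule.mem_top
      obtain ⟨a, ha⟩ := this
      exact ⟨a, ha⟩
  set I := annI τ v
  have hmax : I.IsMaximal := by
    rw [Ideal.isMaximal_iff]
    constructor
    · rw [mem_annI, map_one]; exact hv
    · intro J a hIJ ha haJ
      obtain ⟨b, hb⟩ := hgen (act τ a v) ha v
      have h1 : b * a - 1 ∈ I := by
        rw [mem_annI, map_sub, map_mul, map_one, LinearMap.sub_apply, Module.End.mul_apply, hb]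
        simp
      have h2 := J.sub_mem (J.mul_mem_left b haJ) (hIJ h1)
      simpa using h2
  letI : Field (MonoidAlgebra ℂ G ⧸ I) := Ideal.Quotient.field I
  have hft : Algebra.FiniteType ℂ (MonoidAlgebra ℂ G ⧸ I) := by
    let q := Ideal.Quotient.mkₐ ℂ I
    refine ⟨⟨F.image (fun g => q (MonoidAlgebra.of ℂ G g)), ?_⟩⟩
    rw [eq_top_iff]
    rintro y -
    obtain ⟨a, rfl⟩ := Ideal.Quotient.mkₐ_surjective ℂ I y
    induction a using MonoidAlgebra.induction_on with
    | of g =>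
      obtain ⟨h, hh, hgh⟩ := hF g
      have h1 : (Ideal.Quotient.mkₐ ℂ I) (MonoidAlgebra.of ℂ G g)
          = q (MonoidAlgebra.of ℂ G h) := by
        apply Ideal.Quotient.eq.2
        rw [mem_annI, map_sub, act_of, act_of, hgh, sub_self, LinearMap.zero_apply]
      rw [h1]
      clear h1 hgh
      induction hh using Submonoid.closure_induction with
      | mem x hx =>
        exact Algebra.subset_adjoin (Finset.mem_coe.2 (Finset.mem_image_of_mem _ hx))
      | one => rw [map_one, map_one]; exact Subalgebra.one_mem _
      | mul x y _ _ hx hy => rw [map_mul, map_mul]; exact Subalgebra.mul_mem _ hx hy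
    | add a b ha hb => rw [map_add]; exact Subalgebra.add_mem _ ha hb
    | smul r a ha => rw [map_smul]; exact Subalgebra.smul_mem _ ha r
  have hfin : Module.Finite ℂ (MonoidAlgebra ℂ G ⧸ I) :=
    finite_of_finite_type_of_isJacobsonRing ℂ _
  let L : MonoidAlgebra ℂ G →ₗ[ℂ] X := (LinearMap.applyₗ v).comp (act τ).toLinearMap
  let L' : (MonoidAlgebra ℂ G ⧸ I) →ₗ[ℂ] X :=
    (Submodule.liftQ (I.restrictScalars ℂ) L (fun a ha => ha))
  refine Module.Finite.of_surjective L' ?_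
  intro y
  obtain ⟨a, ha⟩ := hgen v hv y
  exact ⟨Ideal.Quotient.mk I a, ha⟩

end GroupAlg

/-! ### Finite dimensional representations of commutative monoids -/

section FinDim

variable {G : Type*} [CommMonoid G]
variable {X : Type*} [AddCommGroup X] [Module ℂ X]

lemma nakayama_tw (τ : Representation ℂ G X) (θ : G →* ℂ) [Module.Finite ℂ X]
    (h : twKer τ θ = ⊤) : ∃ a, evc θ a ≠ 0 ∧ act τ a = 0 := by
  let iM : Module (MonoidAlgebra ℂ G) X := Module.compHom X (act τ).toRingHom
  have hs : ∀ (a : MonoidAlgebra ℂ G) (x : X), a • x = act τ a x := fun a x => rfl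
  let m : Ideal (MonoidAlgebra ℂ G) := RingHom.ker (evc θ)
  have hle : (⊤ : Submodule (MonoidAlgebra ℂ G) X) ≤ m • ⊤ := by
    rintro x -
    have hx : x ∈ twKer τ θ := h ▸ Submodule.mem_top
    induction hx using Submodule.span_induction with
    | mem w hw =>
      obtain ⟨g, x, rfl⟩ := hw
      have h1 : τ g x - θ g • x
          = (MonoidAlgebra.of ℂ G g - algebraMap ℂ (MonoidAlgebra ℂ G) (θ g)) • x := by
        rw [hs, map_sub, act_of, AlgHom.commutes, LinearMap.sub_apply,
          Module.algebraMap_end_apply]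
      rw [h1]
      refine Submodule.smul_mem_smul ?_ Submodule.mem_top
      rw [RingHom.mem_ker, map_sub, evc_of, AlgHom.commutes]
      simp
    | zero => exact Submodule.zero_mem _
    | add x y _ _ hx hy => exact Submodule.add_mem _ hx hy
    | smul c x _ hx =>
      have h1 : c • x = (algebraMap ℂ (MonoidAlgebra ℂ G) c) • x := by
        rw [hs, AlgHom.commutes, Module.algebraMap_end_apply]
      rw [h1]
      exact Submodule.smul_mem _ _ hx
  have hfg : (⊤ : Submodule (MonoidAlgebra ℂ G) X).FG := by
    obtain ⟨s, hs'⟩ := (Module.Finite.fg_top : (⊤ : Submodule ℂ X).FG)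
    refine ⟨s, ?_⟩
    rw [eq_top_iff]
    rintro x -
    have hx : x ∈ Submodule.span ℂ (s : Set X) := hs' ▸ Submodule.mem_top
    induction hx using Submodule.span_induction with
    | mem w hw => exact Submodule.subset_span hw
    | zero => exact Submodule.zero_mem _
    | add x y _ _ hx hy => exact Submodule.add_mem _ hx hy
    | smul c x _ hx =>
      have h1 : c • x = (algebraMap ℂ (MonoidAlgebra ℂ G) c) • x := by
        rw [hs, AlgHom.commutes, Module.algebraMap_end_apply]
      rw [h1]
      exact Submodule.smul_mem _ _ hx
  obtain ⟨r, hr, hr'⟩ := Submodule.exists_mem_and_smul_eq_self_of_fg_of_le_smul m ⊤ hfg hle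
  have hr0 : evc θ r = 0 := hr
  refine ⟨1 - r, ?_, ?_⟩
  · rw [map_sub, map_one, hr0]; simp
  · ext x
    have := hr' x Submodule.mem_top
    rw [hs] at this
    rw [map_sub, map_one, LinearMap.sub_apply, this]
    simp

lemma twKer_ne_top_of_eigen (τ : Representation ℂ G X) (θ : G →* ℂ) [Module.Finite ℂ X]
    {x : X} (hx : x ≠ 0) (h : ∀ g, τ g x = θ g • x) : twKer τ θ ≠ ⊤ := by
  intro htop
  obtain ⟨a, ha, ha'⟩ := nakayama_tw τ θ htop
  have := act_eigen τ θ h a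
  rw [ha', LinearMap.zero_apply] at this
  exact (smul_ne_zero ha hx) this.symm

/-- Transposed representation of a commutative monoid. -/
def transRep (τ : Representation ℂ G X) : Representation ℂ G (Module.Dual ℂ X) where
  toFun g := (τ g).dualMap
  map_one' := by
    ext φ x; simp [LinearMap.dualMap_apply]
  map_mul' g h := by
    ext φ x
    rw [mul_comm g h]
    simp [LinearMap.dualMap_apply]

lemma eigen_of_twKer_ne_top (τ : Representation ℂ G X) (θ : G →* ℂ) [Module.Finite ℂ X]
    (h : twKer τ θ ≠ ⊤) : ∃ x : X, x ≠ 0 ∧ ∀ g, τ g x = θ g • x := by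
  by_contra hcon
  push Not at hcon
  apply h
  have h1 : twKer (transRep τ) θ = ⊤ := by
    by_contra hne
    obtain ⟨f, hf, hle⟩ := Submodule.exists_le_ker_of_lt_top _ (lt_top_iff_ne_top.2 hne)
    obtain ⟨x, rfl⟩ := (Module.evalEquiv ℂ X).surjective f
    have hx : x ≠ 0 := by rintro rfl; simp at hf
    obtain ⟨g, hg⟩ := hcon x hx
    apply hg
    rw [← sub_eq_zero, ← Module.forall_dual_apply_eq_zero_iff ℂ]
    intro φ
    have h2 := hle (Submodule.subset_span ⟨g, φ, rfl⟩ :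
      transRep τ g φ - θ g • φ ∈ twKer (transRep τ) θ)
    rw [LinearMap.mem_ker] at h2
    simpa [transRep] using h2
  obtain ⟨a, ha, ha'⟩ := nakayama_tw _ θ h1
  have h3 : ∀ (b : MonoidAlgebra ℂ G) (φ : Module.Dual ℂ X) (x : X),
      act (transRep τ) b φ x = φ (act τ b x) := by
    intro b φ x
    induction b using MonoidAlgebra.induction_on with
    | of g => rw [act_of, act_of]; rfl
    | add a b ha hb => simp only [map_add, LinearMap.add_apply, ha, hb]
    | smul r a ha => simp only [map_smul, LinearMap.smul_apply, ha]
  rw [eq_top_iff]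
  rintro x -
  refine mem_twKer_of τ θ (α := a) ?_ ha
  rw [← Module.forall_dual_apply_eq_zero_iff ℂ]
  intro φ
  rw [← h3, ha']; rfl

lemma exists_common_eigen (τ : Representation ℂ G X) : ∀ (n : ℕ) (Y : Submodule ℂ X),
    GRep.Invariant τ Y → Y ≠ ⊥ → FiniteDimensional ℂ Y → Module.finrank ℂ Y = n →
    ∃ y ∈ Y, y ≠ 0 ∧ ∀ g, ∃ c : ℂ, τ g y = c • y := by
  intro n
  induction n using Nat.strong_induction_on with
  | _ n ih =>
    intro Y hY hne hfd hn
    by_cases hsc : ∀ g, ∃ c : ℂ, ∀ y ∈ Y, τ g y = c • y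
    · obtain ⟨y, hy, hy0⟩ := Submodule.exists_mem_ne_zero_of_ne_bot hne
      refine ⟨y, hy, hy0, fun g => ?_⟩
      obtain ⟨c, hc⟩ := hsc g
      exact ⟨c, hc y hy⟩
    · push Not at hsc
      obtain ⟨g, hg⟩ := hsc
      haveI : Nontrivial Y := Submodule.nontrivial_iff_ne_bot.2 hne
      obtain ⟨c, hc⟩ := Module.End.exists_eigenvalue ((τ g).restrict (fun y hy => hY g y hy))
      obtain ⟨⟨w, hwY⟩, hw⟩ := hc.exists_hasEigenvector
      have hw1 : τ g w = c • w := congrArg Subtype.val hw.apply_eq_smul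
      have hw0 : w ≠ 0 := fun h => hw.2 (Subtype.ext h)
      let Z : Submodule ℂ X := Y ⊓ LinearMap.ker (τ g - c • LinearMap.id)
      have hmem : ∀ z, z ∈ Z ↔ z ∈ Y ∧ τ g z = c • z := by
        intro z
        simp [Z, Submodule.mem_inf, LinearMap.mem_ker, sub_eq_zero]
      have hZY : Z < Y := by
        refine lt_of_le_of_ne inf_le_left ?_
        intro heq
        obtain ⟨y, hy, hy'⟩ := hg c
        rw [← heq] at hy
        exact hy' ((hmem y).1 hy).2
      have hZinv : GRep.Invariant τ Z := by
        intro h z hz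
        rw [hmem] at hz ⊢
        refine ⟨hY h z hz.1, ?_⟩
        rw [← Module.End.mul_apply, ← map_mul, mul_comm, map_mul, Module.End.mul_apply, hz.2,
          map_smul]
      have hZfd : FiniteDimensional ℂ Z := Submodule.finiteDimensional_of_le hZY.le
      have hZne : Z ≠ ⊥ := by
        intro h
        have : w ∈ Z := (hmem w).2 ⟨hwY, hw1⟩
        rw [h] at this
        exact hw0 this
      obtain ⟨y, hy, hy'⟩ := ih (Module.finrank ℂ Z) (hn ▸ Submodule.finrank_lt_finrank_of_lt hZY)
        Z hZinv hZne hZfd rfl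
      exact ⟨y, hZY.le hy, hy'⟩

end FinDim

/-! ### Harmonic analysis on the local field -/

section Loc

open Aff

variable {K : Type*} [NontriviallyNormedField K]

/-- `S` as a multiplicative group mapping to `TS`. -/
def sHom : Multiplicative K →* Aff K where
  toFun b := sS b.toAdd
  map_one' := rfl
  map_mul' a b := by ext <;> simp [sS]

/-- Restriction of a `TS`-module to `S`. -/
def sRes {V : Type*} [AddCommGroup V] [Module ℂ V] (ρ : Rep K V) :
    Representation ℂ (Multiplicative K) V := ρ.comp sHom

lemma sRes_apply {V : Type*} [AddCommGroup V] [Module ℂ V] (ρ : Rep K V)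
    (b : Multiplicative K) : sRes ρ b = ρ (sS b.toAdd) := rfl

/-- The character `b ↦ ψ (b * a)`. -/
def psiAt (ψ : AddChar K ℂ) (a : K) : Multiplicative K →* ℂ where
  toFun b := ψ (b.toAdd * a)
  map_one' := by simp
  map_mul' b c := by simp [add_mul, AddChar.map_add_eq_mul]

lemma psiAt_apply (ψ : AddChar K ℂ) (a : K) (b : Multiplicative K) :
    psiAt ψ a b = ψ (b.toAdd * a) := rfl

lemma addChar_ne_zero (ψ : AddChar K ℂ) (x : K) : ψ x ≠ 0 := by
  intro h
  have : ψ (x + -x) = 1 := by simp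
  rw [AddChar.map_add_eq_mul, h, zero_mul] at this
  exact zero_ne_one this

/-- `x₁` is an element of minimal norm on which `ψ` is nontrivial. -/
def MinNT (ψ : AddChar K ℂ) (x₁ : K) : Prop := ψ x₁ ≠ 1 ∧ ∀ x, ‖x‖ < ‖x₁‖ → ψ x = 1

lemma MinNT.ne_zero {ψ : AddChar K ℂ} {x₁ : K} (h : MinNT ψ x₁) : x₁ ≠ 0 := by
  rintro rfl; exact h.1 (by simp)

lemma exists_minNT [ProperSpace K] (ψ : AddChar K ℂ) (hψlc : IsLocallyConstant (⇑ψ))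
    (hψne : ψ ≠ 1) : ∃ x₁, MinNT ψ x₁ := by
  have hcl : IsClosed {x : K | ψ x ≠ 1} := by
    have := hψlc.isClosed_fiber 1
    have h2 := hψlc.isOpen_fiber 1
    rw [← isOpen_compl_iff]
    convert h2 using 1
    ext x; simp
  have hne : ({x : K | ψ x ≠ 1}).Nonempty := by
    by_contra h
    apply hψne
    ext x
    by_contra hx
    exact h ⟨x, hx⟩
  obtain ⟨x₁, hx₁, hd⟩ := hcl.exists_infDist_eq_dist hne 0
  refine ⟨x₁, hx₁, fun x hx => ?_⟩
  by_contra hne'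
  have := Metric.infDist_le_dist_of_mem (x := (0 : K)) (show x ∈ {x : K | ψ x ≠ 1} from hne')
  rw [hd, dist_zero_left, dist_zero_left] at this
  linarith

lemma exists_mul_small [IsUltrametricDist K] [ProperSpace K] (b : K) {ε : ℝ} (hε : 0 < ε) :
    ∃ M : ℕ, 0 < M ∧ ‖(M : K) * b‖ < ε := by
  have hc : IsCompact (Metric.closedBall (0 : K) 1) := isCompact_closedBall 0 1
  obtain ⟨a, -, φ, hφ, hlim⟩ := hc.tendsto_subseq (x := fun n : ℕ => (n : K)) (fun n => by
    simpa using IsUltrametricDist.norm_natCast_le_one K n)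
  have hcs := hlim.cauchySeq
  have hδ : 0 < ε / (‖b‖ + 1) := by positivity
  obtain ⟨N, hN⟩ := Metric.cauchySeq_iff'.1 hcs _ hδ
  have h1 := hN (N + 1) (by omega)
  have h2 : φ N < φ (N + 1) := hφ (by omega)
  refine ⟨φ (N + 1) - φ N, by omega, ?_⟩
  rw [Nat.cast_sub h2.le, norm_mul]
  simp only [Function.comp_apply, dist_eq_norm] at h1
  rw [lt_div_iff₀ (by positivity)] at h1
  have h3 : 0 ≤ ‖(φ (N + 1) : K) - φ N‖ := norm_nonneg _
  nlinarith [norm_nonneg b]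

lemma exists_delta [ProperSpace K] {ψ : AddChar K ℂ} {x₁ : K} (hx : MinNT ψ x₁)
    {C : Set K} (hC : IsCompact C) (x₀ : K) {ε : ℝ} (hε : 0 < ε) :
    ∃ α : MonoidAlgebra ℂ (Multiplicative K),
      (∀ x ∈ Metric.ball x₀ ε, evc (psiAt ψ x) α = 1) ∧
      ∀ x ∈ C, x ∉ Metric.ball x₀ ε → evc (psiAt ψ x) α = 0 := by
  have hC' : IsCompact (C \ Metric.ball x₀ ε) := hC.diff Metric.isOpen_ball
  obtain ⟨t, hts, htf, hcov⟩ := hC'.finite_cover_balls hε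
  let b : K → K := fun y => x₁ / (x₀ - y)
  let β : K → MonoidAlgebra ℂ (Multiplicative K) := fun y =>
    (ψ (b y * x₀) - ψ (b y * y))⁻¹ • (MonoidAlgebra.of ℂ _ (Multiplicative.ofAdd (b y))
      - algebraMap ℂ _ (ψ (b y * y)))
  have hβ : ∀ y x, evc (psiAt ψ x) (β y)
      = (ψ (b y * x₀) - ψ (b y * y))⁻¹ * (ψ (b y * x) - ψ (b y * y)) := by
    intro y x
    simp only [β]
    rw [map_smul, map_sub, evc_of, AlgHom.commutes, psiAt_apply]
    rfl
  have key : ∀ y x z, ‖x - z‖ < ‖x₀ - y‖ → ψ (b y * x) = ψ (b y * z) := by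
    intro y x z h
    have h0 : 0 < ‖x₀ - y‖ := lt_of_le_of_lt (norm_nonneg _) h
    have h1 : ψ (b y * (x - z)) = 1 := by
      apply hx.2
      rw [norm_mul, norm_div, div_mul_eq_mul_div, div_lt_iff₀ h0]
      exact mul_lt_mul_of_pos_left h (norm_pos_iff.2 hx.ne_zero)
    have h2 : b y * x = b y * (x - z) + b y * z := by ring
    rw [h2, AddChar.map_add_eq_mul, h1, one_mul]
  have hfar : ∀ y ∈ t, ε ≤ ‖x₀ - y‖ := by
    intro y hy
    have := (hts hy).2
    rw [Metric.mem_ball, not_lt, dist_comm, dist_eq_norm] at this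
    exact this
  have hne : ∀ y ∈ t, ψ (b y * x₀) - ψ (b y * y) ≠ 0 := by
    intro y hy h
    have h0 : x₀ - y ≠ 0 := norm_pos_iff.1 (hε.trans_le (hfar y hy))
    have h2 : b y * x₀ = x₁ + b y * y := by
      simp only [b]; field_simp; ring
    rw [h2, AddChar.map_add_eq_mul, sub_eq_zero] at h
    have h3 : (ψ x₁ - 1) * ψ (b y * y) = 0 := by linear_combination h
    rcases mul_eq_zero.1 h3 with h4 | h4
    · exact hx.1 (sub_eq_zero.1 h4)
    · exact addChar_ne_zero _ _ h4
  refine ⟨∏ y ∈ htf.toFinset, β y, ?_, ?_⟩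
  · intro x hxb
    rw [map_prod]
    apply Finset.prod_eq_one
    intro y hy
    rw [Set.Finite.mem_toFinset] at hy
    rw [hβ, key y x x₀ (lt_of_lt_of_le (by rwa [Metric.mem_ball, dist_eq_norm] at hxb)
      (hfar y hy)), inv_mul_cancel₀ (hne y hy)]
  · intro x hxC hxb
    have hx' := hcov ⟨hxC, hxb⟩
    simp only [Set.mem_iUnion] at hx'
    obtain ⟨y, hy, hxy⟩ := hx'
    rw [map_prod]
    apply Finset.prod_eq_zero (i := y) (by simpa using hy)
    rw [hβ, key y x y (lt_of_lt_of_le (by rwa [Metric.mem_ball, dist_eq_norm] at hxy)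
      (hfar y hy)), sub_self, mul_zero]

lemma exists_interp [ProperSpace K] {ψ : AddChar K ℂ} {x₁ : K} (hx : MinNT ψ x₁)
    {C : Set K} (hC : IsCompact C) (F : K → ℂ)
    {ε : ℝ} (hε : 0 < ε) (hF : ∀ x y, ‖x - y‖ < ε → F x = F y) :
    ∃ α : MonoidAlgebra ℂ (Multiplicative K), ∀ x ∈ C, evc (psiAt ψ x) α = F x := by
  obtain ⟨t, hts, htf, hcov⟩ := hC.finite_cover_balls hε
  have key : ∀ s : Finset K, ∃ α : MonoidAlgebra ℂ (Multiplicative K),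
      ∀ x ∈ C, x ∈ (⋃ y ∈ s, Metric.ball y ε) → evc (psiAt ψ x) α = F x := by
    intro s
    induction s using Finset.induction_on with
    | empty => exact ⟨0, fun x _ h => by simp at h⟩
    | insert z s _ ih =>
      obtain ⟨α, h1⟩ := ih
      obtain ⟨δ, hδ1, hδ0⟩ := exists_delta hx hC z hε
      refine ⟨α * (1 - δ) + algebraMap ℂ _ (F z) * δ, fun x hxC hxs => ?_⟩
      rw [map_add, map_mul, map_mul, map_sub, map_one, AlgHom.commutes]
      by_cases hxz : x ∈ Metric.ball z ε
      · rw [hδ1 x hxz]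
        rw [Metric.mem_ball, dist_eq_norm] at hxz
        rw [hF x z hxz]; simp
      · rw [hδ0 x hxC hxz, h1 x hxC]
        · simp
        · rw [Finset.set_biUnion_insert] at hxs
          exact hxs.resolve_left hxz
  obtain ⟨α, h1⟩ := key htf.toFinset
  refine ⟨α, fun x hxC => h1 x hxC ?_⟩
  simpa using hcov hxC

/-- Self-duality of the local field. -/
lemma exists_dual_aux [IsUltrametricDist K] [ProperSpace K] {ψ : AddChar K ℂ} {x₁ : K}
    (hx : MinNT ψ x₁) (θ : AddChar K ℂ) {r : ℝ} (hr : 0 < r) (hθ : ∀ b, ‖b‖ < r → θ b = 1)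
    {R : ℝ} (hR : 0 ≤ R) : ∃ a, ∀ b, ‖b‖ ≤ R → θ b = ψ (b * a) := by
  obtain ⟨α, hα⟩ := exists_interp hx (isCompact_closedBall (0 : K) R) (fun b => θ b) hr (by
    intro x y h
    have h2 : x = (x - y) + y := by ring
    show θ x = θ y
    rw [h2, AddChar.map_add_eq_mul, hθ _ h, one_mul])
  let H : AddSubgroup K :=
    { carrier := {b | ‖b‖ ≤ R}
      zero_mem' := by simpa using hR
      add_mem' := fun {a b} ha hb => (IsUltrametricDist.norm_add_le_max a b).trans (max_le ha hb)
      neg_mem' := fun {a} ha => by simpa using ha }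
  let res : (Multiplicative K →* ℂ) → (Multiplicative H →* ℂ) := fun f =>
    f.comp (AddMonoidHom.toMultiplicative H.subtype)
  let chi : K → (Multiplicative H →* ℂ) := fun a => res (psiAt ψ a)
  let θ' := res θ.toMonoidHom
  by_contra hcon
  push Not at hcon
  have hne : ∀ a, chi a ≠ θ' := by
    intro a h
    obtain ⟨b, hb, hb'⟩ := hcon a
    apply hb'
    have := DFunLike.congr_fun h (Multiplicative.ofAdd (⟨b, hb⟩ : H))
    exact this.symm
  have hli := linearIndependent_monoidHom (Multiplicative H) ℂ
  have hnot := hli.notMem_span_image (s := Set.range chi) (x := θ') (by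
    rintro ⟨a, ha⟩; exact hne a ha)
  apply hnot
  have hspan : ∀ β : MonoidAlgebra ℂ (Multiplicative K),
      (fun b : Multiplicative H => evc (psiAt ψ (b.toAdd : K)) β) ∈
        Submodule.span ℂ ((fun f : Multiplicative H →* ℂ => (f : Multiplicative H → ℂ)) ''
          Set.range chi) := by
    intro β
    induction β using MonoidAlgebra.induction_on with
    | of g =>
      apply Submodule.subset_span
      refine ⟨chi g.toAdd, ⟨_, rfl⟩, ?_⟩
      funext b
      rw [evc_of]
      show ψ ((b.toAdd : K) * g.toAdd) = ψ (g.toAdd * (b.toAdd : K))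
      rw [mul_comm]
    | add a b ha hb =>
      convert Submodule.add_mem _ ha hb using 1
      funext x
      simp
    | smul c a ha =>
      convert Submodule.smul_mem _ c ha using 1
      funext x
      simp
  have := hspan α
  convert this using 1
  funext b
  rw [hα]
  · rfl
  · rw [mem_closedBall_zero_iff]; exact b.toAdd.2

lemma exists_dual [IsUltrametricDist K] [ProperSpace K] {ψ : AddChar K ℂ}
    (hψlc : IsLocallyConstant (⇑ψ)) {x₁ : K}
    (hx : MinNT ψ x₁) (θ : AddChar K ℂ) {r : ℝ} (hr : 0 < r) (hθ : ∀ b, ‖b‖ < r → θ b = 1) :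
    ∃ a, ∀ b, θ b = ψ (b * a) := by
  let t : ℕ → Set K := fun n => {a | ∀ b, ‖b‖ ≤ r + n → θ b = ψ (b * a)}
  have hcl : ∀ n, IsClosed (t n) := by
    intro n
    have : t n = ⋂ b : K, ⋂ _ : ‖b‖ ≤ r + n, {a | θ b = ψ (b * a)} := by
      ext a; simp [t]
    rw [this]
    refine isClosed_iInter fun b => isClosed_iInter fun _ => ?_
    exact isClosed_eq continuous_const (hψlc.continuous.comp (continuous_const.mul continuous_id))
  have h := IsCompact.nonempty_iInter_of_sequence_nonempty_isCompact_isClosed t ?_ ?_ ?_ hcl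
  · obtain ⟨a, ha⟩ := h
    refine ⟨a, fun b => ?_⟩
    rw [Set.mem_iInter] at ha
    obtain ⟨n, hn⟩ := exists_nat_ge (‖b‖)
    exact ha n b (by linarith)
  · intro n a ha b hb
    apply ha
    push_cast
    linarith
  · intro n
    exact exists_dual_aux hx θ hr hθ (by positivity)
  · refine IsCompact.of_isClosed_subset (isCompact_closedBall (0 : K) (‖x₁‖ / r)) (hcl 0) ?_
    intro a ha
    rw [mem_closedBall_zero_iff]
    by_contra hlt
    rw [not_le, div_lt_iff₀ hr] at hlt
    have ha0 : a ≠ 0 := by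
      rintro rfl
      simp at hlt
      linarith [norm_nonneg x₁]
    have hsm : ‖x₁ / a‖ < r := by
      rw [norm_div, div_lt_iff₀ (norm_pos_iff.2 ha0)]; linarith
    have h1 := ha (x₁ / a) (by simp; simp at hsm; linarith)
    rw [hθ _ hsm, div_mul_cancel₀ _ ha0] at h1
    exact hx.1 h1.symm

end Loc

/-! ### Smoothness -/

section Smooth

set_option linter.unusedSectionVars false

open Aff

variable {K : Type*} [NontriviallyNormedField K]
variable {V W : Type*} [AddCommGroup V] [Module ℂ V] [AddCommGroup W] [Module ℂ W]

lemma continuous_sS : Continuous (sS : K → Aff K) := by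
  refine continuous_induced_rng.2 ?_
  exact continuous_const.prodMk continuous_id

lemma continuous_xT : Continuous (xT : Kˣ → Aff K) := by
  refine continuous_induced_rng.2 ?_
  exact continuous_id.prodMk continuous_const

lemma smooth_s {ρ : Rep K V} (hρ : IsSmoothRep ρ) (v : V) :
    ∃ ε > 0, ∀ b : K, ‖b‖ < ε → ρ (sS b) v = v := by
  have h := (hρ v).preimage continuous_sS
  have h0 : (0 : K) ∈ sS ⁻¹' {g : Aff K | ρ g v = v} := by
    show ρ (sS 0) v = v
    have : (sS 0 : Aff K) = 1 := rfl
    rw [this]; simp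
  obtain ⟨ε, hε, hb⟩ := Metric.isOpen_iff.1 h 0 h0
  refine ⟨ε, hε, fun b hb' => ?_⟩
  exact hb (by simpa using hb')

lemma smooth_t {ρ : Rep K V} (hρ : IsSmoothRep ρ) (v : V) :
    IsOpen {u : Kˣ | ρ (xT u) v = v} := (hρ v).preimage continuous_xT

lemma rep_mul (ρ : Rep K V) (g h : Aff K) (v : V) : ρ (g * h) v = ρ g (ρ h v) := by
  rw [map_mul, Module.End.mul_apply]

lemma rep_s_add (ρ : Rep K V) (a b : K) (v : V) : ρ (sS (a + b)) v = ρ (sS a) (ρ (sS b) v) := by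
  rw [← rep_mul]; congr 2; ext <;> simp

lemma rep_t_mul (ρ : Rep K V) (a b : Kˣ) (v : V) : ρ (xT (a * b)) v = ρ (xT a) (ρ (xT b) v) := by
  rw [← rep_mul]; congr 2; ext <;> simp

lemma rep_t_comm (ρ : Rep K V) (a b : Kˣ) (v : V) :
    ρ (xT a) (ρ (xT b) v) = ρ (xT b) (ρ (xT a) v) := by
  rw [← rep_t_mul, mul_comm, rep_t_mul]

lemma rep_t_one (ρ : Rep K V) (v : V) : ρ (xT 1) v = v := by
  have : (xT 1 : Aff K) = 1 := rfl
  rw [this]; simp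

lemma rep_t_s (ρ : Rep K V) (a : Kˣ) (b : K) (v : V) :
    ρ (xT a) (ρ (sS b) v) = ρ (sS (a * b)) (ρ (xT a) v) := by
  rw [← rep_mul, ← rep_mul, mul_sS]; rfl

lemma rep_t_inv (ρ : Rep K V) (a : Kˣ) (v : V) : ρ (xT a⁻¹) (ρ (xT a) v) = v := by
  rw [← rep_t_mul, inv_mul_cancel, rep_t_one]

lemma rep_decomp (ρ : Rep K V) (g : Aff K) (v : V) :
    ρ g v = ρ (sS g.s) (ρ (xT g.t) v) := by
  rw [← rep_mul]; congr 2; ext <;> simp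

/-- To check invariance it suffices to check on `S` and `T`. -/
lemma invariant_of (ρ : Rep K V) (U : Submodule ℂ V) (hs : ∀ b, ∀ v ∈ U, ρ (sS b) v ∈ U)
    (ht : ∀ u, ∀ v ∈ U, ρ (xT u) v ∈ U) : GRep.Invariant ρ U := by
  intro g v hv
  rw [rep_decomp]; exact hs _ _ (ht _ _ hv)

lemma ofAdd_pow_toAdd (b : Multiplicative K) (M : ℕ) :
    (b ^ M).toAdd = (M : K) * b.toAdd := by
  simp [nsmul_eq_mul]

variable [IsUltrametricDist K] [ProperSpace K]

lemma smooth_fin {ρ : Rep K V} (hρ : IsSmoothRep ρ) (θ : Multiplicative K →* ℂ) {r : ℝ}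
    (hr : 0 < r) (hθ : ∀ b : K, ‖b‖ < r → θ (Multiplicative.ofAdd b) = 1)
    (g : Multiplicative K) (x : V) :
    ∃ M, 0 < M ∧ sRes ρ (g ^ M) x = x ∧ θ (g ^ M) = 1 := by
  obtain ⟨ε, hε, h⟩ := smooth_s hρ x
  obtain ⟨M, hM, hb⟩ := exists_mul_small g.toAdd (lt_min hε hr)
  refine ⟨M, hM, ?_, ?_⟩
  · rw [sRes_apply, ofAdd_pow_toAdd]; exact h _ (hb.trans_le (min_le_left _ _))
  · have := hθ _ (hb.trans_le (min_le_right _ _))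
    rw [← ofAdd_pow_toAdd] at this
    exact this

lemma sCoinvKer_eq (ρ : Rep K V) (ψ : AddChar K ℂ) :
    sCoinvKer ρ = twKer (sRes ρ) (psiAt ψ 0) := by
  unfold sCoinvKer twKer
  congr 1
  ext w
  constructor
  · rintro ⟨b, v, rfl⟩
    exact ⟨Multiplicative.ofAdd b, v, by simp [sRes_apply, psiAt_apply]⟩
  · rintro ⟨b, v, rfl⟩
    exact ⟨b.toAdd, v, by simp [sRes_apply, psiAt_apply]⟩

lemma mem_sCoinvKer_iff {ρ : Rep K V} (hρ : IsSmoothRep ρ) (ψ : AddChar K ℂ) (v : V) :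
    v ∈ sCoinvKer ρ ↔ ∃ α, act (sRes ρ) α v = 0 ∧ evc (psiAt ψ 0) α ≠ 0 := by
  rw [sCoinvKer_eq ρ ψ]
  constructor
  · intro h
    refine exists_of_mem_twKer (sRes ρ) _ ?_ h
    exact fun g x => smooth_fin hρ _ one_pos (fun b _ => by simp [psiAt_apply]) g x
  · rintro ⟨α, h, h'⟩
    exact mem_twKer_of _ _ h h'

lemma psi_small {ψ : AddChar K ℂ} (hψlc : IsLocallyConstant (⇑ψ)) (a : K) :
    ∃ r > 0, ∀ b : K, ‖b‖ < r → ψ (b * a) = 1 := by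
  have h : IsOpen {b : K | ψ (b * a) = 1} :=
    (hψlc.isOpen_fiber 1).preimage (continuous_id.mul continuous_const)
  obtain ⟨r, hr, hb⟩ := Metric.isOpen_iff.1 h 0 (by simp)
  exact ⟨r, hr, fun b hb' => hb (by simpa using hb')⟩

lemma mem_twKer_psi_iff {ρ : Rep K V} (hρ : IsSmoothRep ρ) {ψ : AddChar K ℂ}
    (hψlc : IsLocallyConstant (⇑ψ)) (a : K) (v : V) :
    v ∈ twKer (sRes ρ) (psiAt ψ a) ↔ ∃ α, act (sRes ρ) α v = 0 ∧ evc (psiAt ψ a) α ≠ 0 := by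
  constructor
  · intro h
    obtain ⟨r, hr, hb⟩ := psi_small hψlc a
    refine exists_of_mem_twKer (sRes ρ) _ ?_ h
    exact fun g x => smooth_fin hρ _ hr (fun b hb' => by simpa [psiAt_apply] using hb b hb') g x
  · rintro ⟨α, h, h'⟩
    exact mem_twKer_of _ _ h h'

lemma sub_eq_zero_of_fixed {ρ : Rep K V} (hρ : IsSmoothRep ρ) (b : K) (v : V)
    (h : ρ (sS b) (ρ (sS b) v - v) = ρ (sS b) v - v) : ρ (sS b) v = v := by
  obtain ⟨ε, hε, hs⟩ := smooth_s hρ v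
  obtain ⟨M, hM, hb⟩ := exists_mul_small b hε
  have key : ∀ n : ℕ, ρ (sS ((n : K) * b)) v = v + n • (ρ (sS b) v - v) := by
    intro n
    induction n with
    | zero =>
      have : (sS 0 : Aff K) = 1 := rfl
      simp [this]
    | succ n ih =>
      rw [Nat.cast_succ, add_mul, one_mul, add_comm, rep_s_add, ih, map_add, map_nsmul, h,
        succ_nsmul]
      abel
  have h1 := key M
  rw [hs _ hb, left_eq_add] at h1
  rw [← sub_eq_zero]
  have h2 : (M : ℂ) • (ρ (sS b) v - v) = 0 := by rw [Nat.cast_smul_eq_nsmul]; exact h1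
  rcases smul_eq_zero.1 h2 with h3 | h3
  · exact absurd (Nat.cast_eq_zero.1 h3) hM.ne'
  · exact h3

lemma sInv_inf_sCoinvKer {ρ : Rep K V} (hρ : IsSmoothRep ρ) {v : V} (h1 : v ∈ sInv ρ)
    (h2 : v ∈ sCoinvKer ρ) : v = 0 := by
  obtain ⟨α, h, h'⟩ := (mem_sCoinvKer_iff hρ 1 v).1 h2
  rw [act_eigen (sRes ρ) (psiAt 1 0) (x := v)] at h
  · exact (smul_eq_zero.1 h).resolve_left h'
  · intro g
    rw [sRes_apply, h1]; simp [psiAt_apply]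

lemma smooth_sub {ρ : Rep K V} (hρ : IsSmoothRep ρ) {U : Submodule ℂ V}
    (hU : GRep.Invariant ρ U) : IsSmoothRep (GRep.sub ρ hU) := by
  intro v
  convert hρ v using 3
  rw [Subtype.ext_iff]; rfl

lemma isOpen_stab_of (σ : Rep K W) (w : W) {A : Set (Aff K)} (hA : IsOpen A) (h1 : (1 : Aff K) ∈ A)
    (h : ∀ g ∈ A, σ g w = w) : IsOpen {g : Aff K | σ g w = w} := by
  rw [isOpen_iff_mem_nhds]
  intro g hg
  have hc : Continuous (fun x : Aff K => g⁻¹ * x) := by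
    refine continuous_induced_rng.2 ?_
    have hd : Continuous (fun x : Aff K => ((x.t, x.s) : Kˣ × K)) := continuous_induced_dom
    have ht : Continuous (fun x : Aff K => x.t) := hd.fst
    have hs : Continuous (fun x : Aff K => x.s) := hd.snd
    exact (continuous_const.mul ht).prodMk (continuous_const.add (continuous_const.mul hs))
  have : (fun x : Aff K => g⁻¹ * x) ⁻¹' A ∈ nhds g :=
    (hA.preimage hc).mem_nhds (by simpa using h1)
  filter_upwards [this] with x hx
  have h2 := h _ hx
  have h3 : σ (g * (g⁻¹ * x)) w = w := by
    rw [rep_mul, h2]; exact hg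
  rwa [mul_inv_cancel_left] at h3

lemma smooth_of_surj {ρ : Rep K V} (hρ : IsSmoothRep ρ) {σ : Rep K W} (f : V →ₗ[ℂ] W)
    (hf : GRep.Equivariant ρ σ f) (hs : Function.Surjective f) : IsSmoothRep σ := by
  intro w
  obtain ⟨v, rfl⟩ := hs w
  refine isOpen_stab_of σ _ (hρ v) (by simp) ?_
  intro g hg
  rw [← hf, show ρ g v = v from hg]

lemma smooth_subquot {ρ : Rep K V} (hρ : IsSmoothRep ρ) {A B : Submodule ℂ V}
    (hA : GRep.Invariant ρ A) (hB : GRep.Invariant ρ B) :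
    IsSmoothRep (GRep.subquot ρ hA hB) :=
  smooth_of_surj (smooth_sub hρ hB) (A.comap B.subtype).mkQ
    (GRep.mkQ_equivariant _ _ _) (Submodule.mkQ_surjective _)

end Smooth

/-! ### Function spaces -/

section Fun

set_option linter.unusedSectionVars false

open Aff

variable {K : Type*} [NontriviallyNormedField K] [IsUltrametricDist K] [ProperSpace K]

lemma isCompact_annulus {ε : ℝ} (hε : 0 < ε) (R : ℝ) :
    IsCompact {u : Kˣ | ε ≤ ‖(u : K)‖ ∧ ‖(u : K)‖ ≤ R} := by
  rw [(Units.isEmbedding_val₀ (G₀ := K)).isCompact_iff]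
  have : (((↑) : Kˣ → K) '' {u : Kˣ | ε ≤ ‖(u : K)‖ ∧ ‖(u : K)‖ ≤ R})
      = {x : K | ε ≤ ‖x‖} ∩ Metric.closedBall 0 R := by
    ext x
    constructor
    · rintro ⟨u, ⟨h1, h2⟩, rfl⟩
      exact ⟨h1, by simpa using h2⟩
    · rintro ⟨h1, h2⟩
      have hx : x ≠ 0 := by
        rintro rfl
        have : ε ≤ ‖(0 : K)‖ := h1
        rw [norm_zero] at this; linarith
      exact ⟨Units.mk0 x hx, ⟨h1, by simpa using h2⟩, rfl⟩
  rw [this]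
  exact (isCompact_closedBall 0 R).inter_left (isClosed_le continuous_const continuous_norm)

lemma SSx_iff (f : Kˣ → ℂ) : f ∈ SSx K ↔ IsLocallyConstant f ∧ ∃ ε > 0, ∃ R, ∀ u : Kˣ,
    f u ≠ 0 → ε ≤ ‖(u : K)‖ ∧ ‖(u : K)‖ ≤ R := by
  rw [mem_SSx]
  refine and_congr_right fun hlc => ?_
  constructor
  · intro h
    obtain ⟨R, hR⟩ := (h.isCompact.image (Units.continuous_val)).isBounded.exists_norm_le
    obtain ⟨E, hE⟩ := (h.isCompact.image
      (Units.continuous_val.comp continuous_inv)).isBounded.exists_norm_le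
    refine ⟨(max E 1)⁻¹, by positivity, R, fun u hu => ?_⟩
    have hu' : u ∈ tsupport f := subset_tsupport f hu
    refine ⟨?_, hR _ ⟨u, hu', rfl⟩⟩
    have h1 := hE _ ⟨u, hu', rfl⟩
    simp only [Function.comp_apply, Units.val_inv_eq_inv_val, norm_inv] at h1
    have h0 : 0 < ‖(u : K)‖ := norm_pos_iff.2 u.ne_zero
    rw [inv_le_comm₀ (by positivity) h0]
    exact h1.trans (le_max_left _ _)
  · rintro ⟨ε, hε, R, h⟩
    refine HasCompactSupport.intro (isCompact_annulus hε R) fun x hx => ?_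
    by_contra hne
    exact hx (h x hne)

lemma Cb_iff (f : Kˣ → ℂ) : f ∈ Cb K ↔ IsLocallyConstant f ∧ ∃ R, ∀ u : Kˣ,
    f u ≠ 0 → ‖(u : K)‖ ≤ R := by
  rw [mem_Cb]
  refine and_congr_right fun hlc => ?_
  constructor
  · intro h
    obtain ⟨R, hR⟩ := h.isBounded.exists_norm_le
    exact ⟨R, fun u hu => hR _ (subset_closure ⟨u, hu, rfl⟩)⟩
  · rintro ⟨R, h⟩
    refine IsCompact.of_isClosed_subset (isCompact_closedBall (0 : K) R) isClosed_closure ?_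
    refine closure_minimal ?_ Metric.isClosed_closedBall
    rintro x ⟨u, hu, rfl⟩
    simpa using h u hu

lemma SSx_le_Cb : SSx K ≤ Cb K := by
  intro f hf
  obtain ⟨h1, ε, hε, R, h2⟩ := (SSx_iff f).1 hf
  exact (Cb_iff f).2 ⟨h1, R, fun u hu => (h2 u hu).2⟩

/-- criterion for an element of `C_b` to be in `𝕊`. -/
lemma SSx_of_Cb {f : Kˣ → ℂ} (hf : f ∈ Cb K) {ε : ℝ} (hε : 0 < ε)
    (h : ∀ u : Kˣ, ‖(u : K)‖ < ε → f u = 0) : f ∈ SSx K := by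
  obtain ⟨h1, R, h2⟩ := (Cb_iff f).1 hf
  refine (SSx_iff f).2 ⟨h1, ε, hε, R, fun u hu => ⟨?_, h2 u hu⟩⟩
  by_contra hlt
  exact hu (h u (not_le.1 hlt))

lemma SSx_vanish {f : Kˣ → ℂ} (hf : f ∈ SSx K) :
    ∃ ε > 0, ∀ u : Kˣ, ‖(u : K)‖ < ε → f u = 0 := by
  obtain ⟨h1, ε, hε, R, h2⟩ := (SSx_iff f).1 hf
  refine ⟨ε, hε, fun u hu => ?_⟩
  by_contra hne
  exact absurd (h2 u hne).1 (not_le.2 hu)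

lemma act_Cx (ψ : AddChar K ℂ) (α : MonoidAlgebra ℂ (Multiplicative K)) (f : Kˣ → ℂ) (x : Kˣ) :
    act (sRes (repCx K ψ)) α f x = evc (psiAt ψ (x : K)) α * f x := by
  have := act_functional (sRes (repCx K ψ)) (psiAt ψ (x : K))
    (LinearMap.proj x : (Kˣ → ℂ) →ₗ[ℂ] ℂ) (fun g y => by
      simp [sRes_apply, psiAt_apply]) α f
  simpa using this

lemma act_Cc (ψ : AddChar K ℂ) (χ : Kˣ →* ℂˣ) (α : MonoidAlgebra ℂ (Multiplicative K))
    (f : K → ℂ) (x : K) :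
    act (sRes (repCc K ψ χ)) α f x = evc (psiAt ψ x) α * f x := by
  have := act_functional (sRes (repCc K ψ χ)) (psiAt ψ x)
    (LinearMap.proj x : (K → ℂ) →ₗ[ℂ] ℂ) (fun g y => by
      simp [sRes_apply, psiAt_apply]) α f
  simpa using this

lemma act_E (ψ : AddChar K ℂ) (hψlc : IsLocallyConstant (⇑ψ)) (χ : Kˣ →* ℂˣ)
    (α : MonoidAlgebra ℂ (Multiplicative K)) (f : ↥(CcK K)) (x : K) :
    (act (sRes (ERep ψ hψlc χ)) α f : K → ℂ) x = evc (psiAt ψ x) α * (f : K → ℂ) x := by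
  have := act_functional (sRes (ERep ψ hψlc χ)) (psiAt ψ x)
    ((LinearMap.proj x : (K → ℂ) →ₗ[ℂ] ℂ).comp (CcK K).subtype) (fun g y => by
      show (repCc K ψ χ (sS g.toAdd) y) x = _
      simp [psiAt_apply]) α f
  simpa using this

lemma Cb_sub_mem {ψ : AddChar K ℂ} (hψlc : IsLocallyConstant (⇑ψ)) {f : Kˣ → ℂ} (hf : f ∈ Cb K)
    (b : K) : repCx K ψ (sS b) f - f ∈ SSx K := by
  obtain ⟨h1, R, h2⟩ := (Cb_iff f).1 hf
  have hlc : IsLocallyConstant (repCx K ψ (sS b) f) := by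
    have heq : repCx K ψ (sS b) f = (fun x : Kˣ => ψ (b * (x : K))) * f := by
      funext x; simp
    rw [heq]
    exact (hψlc.comp_continuous (continuous_const.mul Units.continuous_val)).mul h1
  have hCb : repCx K ψ (sS b) f - f ∈ Cb K := by
    refine Submodule.sub_mem _ ?_ hf
    refine (Cb_iff _).2 ⟨hlc, R, fun u hu => h2 u ?_⟩
    intro h; apply hu; simp [h]
  obtain ⟨r, hr, hs⟩ := psi_small hψlc b
  refine SSx_of_Cb hCb hr fun u hu => ?_
  simp [mul_comm b, hs _ hu]

lemma Cx_no_inv {ψ : AddChar K ℂ} {x₁ : K} (hx : MinNT ψ x₁) {f : Kˣ → ℂ}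
    (hf : ∀ b, repCx K ψ (sS b) f = f) : f = 0 := by
  funext x
  by_contra hne
  have h := congrFun (hf (x₁ / x)) x
  simp only [repCx_apply, sS_s, sS_t, mul_one] at h
  rw [div_mul_cancel₀ _ x.ne_zero] at h
  exact hx.1 (mul_right_cancel₀ hne (h.trans (one_mul _).symm))

lemma Cc_no_inv {ψ : AddChar K ℂ} {x₁ : K} (hx : MinNT ψ x₁) (χ : Kˣ →* ℂˣ) {f : K → ℂ}
    (hlc : IsLocallyConstant f) (hf : ∀ b, repCc K ψ χ (sS b) f = f) : f = 0 := by
  have h1 : ∀ x, x ≠ 0 → f x = 0 := by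
    intro x hx0
    by_contra hne
    have h := congrFun (hf (x₁ / x)) x
    simp only [repCc_apply, sS_s, sS_t, map_one, Units.val_one, mul_one, one_mul] at h
    rw [div_mul_cancel₀ _ hx0] at h
    exact hx.1 (mul_right_cancel₀ hne (h.trans (one_mul _).symm))
  funext x
  by_cases hx0 : x = 0
  · subst hx0
    have ho := hlc.isOpen_fiber (f 0)
    obtain ⟨ε, hε, hb⟩ := Metric.isOpen_iff.1 ho 0 rfl
    obtain ⟨y, hy, hy'⟩ := NormedField.exists_norm_lt K hε
    have : f y = f 0 := hb (by simpa using hy')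
    rw [← this]
    exact h1 y (norm_pos_iff.1 hy)
  · exact h1 x hx0

lemma Cb_no_eigen (ψ : AddChar K ℂ) (χ : Kˣ →* ℂˣ) {f : Kˣ → ℂ} (hf : f ∈ Cb K)
    (h : ∀ u, repCx K ψ (xT u) f = (χ u : ℂ) • f) : f = 0 := by
  obtain ⟨h1, R, h2⟩ := (Cb_iff f).1 hf
  have key : ∀ u, f u = χ u * f 1 := by
    intro u
    have := congrFun (h u) 1
    simpa using this
  obtain ⟨y, hy⟩ := NormedField.exists_lt_norm K (max R 0)
  have hy0 : y ≠ 0 := norm_pos_iff.1 ((le_max_right _ _).trans_lt hy)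
  have hz : f (Units.mk0 y hy0) = 0 := by
    by_contra hne
    exact absurd (h2 _ hne) (not_le.2 ((le_max_left _ _).trans_lt hy))
  rw [key] at hz
  have : f 1 = 0 := by simpa using hz
  funext u
  rw [key, this]; simp

lemma SSx_ann {ψ : AddChar K ℂ} {x₁ : K} (hx : MinNT ψ x₁) {g : Kˣ → ℂ} (hg : g ∈ SSx K) :
    ∃ α, act (sRes (repCx K ψ)) α g = 0 ∧ evc (psiAt ψ (0 : K)) α ≠ 0 := by
  obtain ⟨h1, ε, hε, R, h2⟩ := (SSx_iff g).1 hg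
  obtain ⟨α, hα1, hα2⟩ := exists_delta hx (isCompact_closedBall (0 : K) R) 0 hε
  refine ⟨α, ?_, by rw [hα1 0 (by simpa using hε)]; simp⟩
  funext x
  rw [act_Cx]
  by_cases hgx : g x = 0
  · simp [hgx]
  · obtain ⟨h3, h4⟩ := h2 x hgx
    rw [hα2 x (by simpa using h4) (by simpa using h3)]; simp

lemma Cc_ann {ψ : AddChar K ℂ} {x₁ : K} (hx : MinNT ψ x₁) {g : K → ℂ} (hg : g ∈ CcK K)
    (hg0 : g 0 = 0) : ∃ α : MonoidAlgebra ℂ (Multiplicative K),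
      (∀ x, evc (psiAt ψ x) α * g x = 0) ∧ evc (psiAt ψ (0 : K)) α ≠ 0 := by
  obtain ⟨ε, hε, hb⟩ := Metric.isOpen_iff.1 (hg.1.isOpen_fiber 0) 0 hg0
  obtain ⟨α, hα1, hα2⟩ := exists_delta hx hg.2.isCompact 0 hε
  refine ⟨α, ?_, by rw [hα1 0 (by simpa using hε)]; simp⟩
  intro x
  by_cases hgx : g x = 0
  · simp [hgx]
  · rw [hα2 x (subset_tsupport g hgx) (fun h => hgx (hb h))]; simp

lemma continuous_evc {ψ : AddChar K ℂ} (hψlc : IsLocallyConstant (⇑ψ))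
    (α : MonoidAlgebra ℂ (Multiplicative K)) : Continuous fun x : K => evc (psiAt ψ x) α := by
  induction α using MonoidAlgebra.induction_on with
  | of g =>
    simp only [evc_of, psiAt_apply]
    exact hψlc.continuous.comp (continuous_const.mul continuous_id)
  | add a b ha hb => simp only [map_add]; exact ha.add hb
  | smul r a ha => simp only [map_smul]; exact ha.const_smul r

lemma SSx_of_ann {ψ : AddChar K ℂ} (hψlc : IsLocallyConstant (⇑ψ)) {f : Kˣ → ℂ} (hf : f ∈ Cb K)
    {α : MonoidAlgebra ℂ (Multiplicative K)} (h : act (sRes (repCx K ψ)) α f = 0)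
    (h0 : evc (psiAt ψ (0 : K)) α ≠ 0) : f ∈ SSx K := by
  have ho : IsOpen {x : K | evc (psiAt ψ x) α ≠ 0} :=
    isOpen_ne_fun (continuous_evc hψlc α) continuous_const
  obtain ⟨ε, hε, hb⟩ := Metric.isOpen_iff.1 ho 0 h0
  refine SSx_of_Cb hf hε fun u hu => ?_
  have h1 := congrFun h u
  rw [act_Cx] at h1
  have h2 : evc (psiAt ψ (u : K)) α ≠ 0 := hb (by simpa using hu)
  simpa [h2] using h1

/-- the indicator of a ball (in `K`) as a function on units -/
def ballI (y : K) (r : ℝ) : Kˣ → ℂ := fun x => if (x : K) ∈ Metric.ball y r then 1 else 0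

lemma mul_ballI_mem {ψ : AddChar K ℂ} {x₁ : K} (hx : MinNT ψ x₁)
    {U : Submodule ℂ (Kˣ → ℂ)} (hU : GRep.Invariant (repCx K ψ) U) (hUC : U ≤ Cb K)
    {h : Kˣ → ℂ} (hh : h ∈ U) (y : K) {r : ℝ} (hr : 0 < r) : h * ballI y r ∈ U := by
  obtain ⟨-, R, h2⟩ := (Cb_iff h).1 (hUC hh)
  obtain ⟨α, hα1, hα2⟩ := exists_delta hx (isCompact_closedBall (0 : K) R) y hr
  have : act (sRes (repCx K ψ)) α h ∈ U :=
    act_mem _ U (fun g v hv => hU _ _ hv) α hh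
  convert this using 1
  funext x
  rw [act_Cx, Pi.mul_apply, mul_comm]
  by_cases hgx : h x = 0
  · simp [hgx]
  · congr 1
    unfold ballI
    split_ifs with hb
    · rw [hα1 _ hb]
    · rw [hα2 _ (by simpa using h2 x hgx) hb]

lemma ballI_mem {ψ : AddChar K ℂ} (hψlc : IsLocallyConstant (⇑ψ)) {x₁ : K} (hx : MinNT ψ x₁)
    {U : Submodule ℂ (Kˣ → ℂ)} (hU : GRep.Invariant (repCx K ψ) U) (hUC : U ≤ Cb K)
    (hne : U ≠ ⊥) (y : Kˣ) : ∃ δ > 0, ∀ r, 0 < r → r ≤ δ → ballI (y : K) r ∈ U := by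
  obtain ⟨f, hf, hf0⟩ := Submodule.exists_mem_ne_zero_of_ne_bot hne
  obtain ⟨x₀, hx₀⟩ := Function.ne_iff.1 hf0
  have hlc := ((Cb_iff f).1 (hUC hf)).1
  have ho : IsOpen (((↑) : Kˣ → K) '' {x | f x = f x₀}) :=
    Units.isOpenEmbedding_val.isOpenMap _ (hlc.isOpen_fiber (f x₀))
  obtain ⟨δ, hδ, hb⟩ := Metric.isOpen_iff.1 ho x₀ ⟨x₀, rfl, rfl⟩
  have hy0 : 0 < ‖(y : K)‖ := norm_pos_iff.2 y.ne_zero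
  have hx0 : 0 < ‖(x₀ : K)‖ := norm_pos_iff.2 x₀.ne_zero
  refine ⟨δ * ‖(y : K)‖ / ‖(x₀ : K)‖, by positivity, fun r hr hrδ => ?_⟩
  have hr' : 0 < r * ‖(x₀ : K)‖ / ‖(y : K)‖ := by positivity
  have hr'δ : r * ‖(x₀ : K)‖ / ‖(y : K)‖ ≤ δ := by
    rw [div_le_iff₀ hy0]; rwa [le_div_iff₀ hx0] at hrδ
  have h1 := mul_ballI_mem hx hU hUC hf (x₀ : K) hr'
  have h2 : (f x₀)⁻¹ • (f * ballI (x₀ : K) (r * ‖(x₀ : K)‖ / ‖(y : K)‖)) ∈ U :=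
    U.smul_mem _ h1
  have h3 := hU (xT (x₀ * y⁻¹)) _ h2
  convert h3 using 1
  funext x
  have hmem : ((x * (x₀ * y⁻¹) : Kˣ) : K) ∈ Metric.ball (x₀ : K) (r * ‖(x₀ : K)‖ / ‖(y : K)‖)
      ↔ (x : K) ∈ Metric.ball (y : K) r := by
    rw [mem_ball_iff_norm, mem_ball_iff_norm]
    have : ((x * (x₀ * y⁻¹) : Kˣ) : K) - x₀ = ((x : K) - y) * x₀ / y := by
      push_cast
      field_simp [y.ne_zero]
    rw [this, norm_div, norm_mul, div_lt_div_iff_of_pos_right hy0, mul_lt_mul_iff_left₀ hx0]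
  simp only [repCx_apply, xT_s, xT_t, zero_mul, AddChar.map_zero_eq_one, one_mul, Pi.smul_apply,
    Pi.mul_apply, smul_eq_mul, ballI, hmem]
  split_ifs with h
  · have h4 : ((x * (x₀ * y⁻¹) : Kˣ) : K) ∈ Metric.ball (x₀ : K) δ :=
      Metric.ball_subset_ball hr'δ (hmem.2 h)
    obtain ⟨z, hz, hz'⟩ := hb h4
    rw [← Units.ext hz', show f z = f x₀ from hz, mul_one, inv_mul_cancel₀ hx₀]
  · simp

lemma SSx_le_of_invariant {ψ : AddChar K ℂ} (hψlc : IsLocallyConstant (⇑ψ)) {x₁ : K}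
    (hx : MinNT ψ x₁) {U : Submodule ℂ (Kˣ → ℂ)} (hU : GRep.Invariant (repCx K ψ) U)
    (hUC : U ≤ Cb K) (hne : U ≠ ⊥) : SSx K ≤ U := by
  intro f hf
  obtain ⟨hlc, hcs⟩ := hf
  have key : ∃ A : Set Kˣ, tsupport f ⊆ A ∧ (∀ h ∈ U, h * A.indicator 1 ∈ U) ∧
      f * A.indicator 1 ∈ U := by
    refine hcs.isCompact.induction_on
      (p := fun s => ∃ A : Set Kˣ, s ⊆ A ∧ (∀ h ∈ U, h * A.indicator 1 ∈ U) ∧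
        f * A.indicator 1 ∈ U) ?_ ?_ ?_ ?_
    · have e0 : ∀ h : Kˣ → ℂ, h * (∅ : Set Kˣ).indicator 1 = 0 := by
        intro h; funext x; simp
      refine ⟨∅, subset_rfl, fun h _ => ?_, ?_⟩
      · rw [e0]; exact U.zero_mem
      · rw [e0]; exact U.zero_mem
    · rintro s t hst ⟨A, h1, h2⟩
      exact ⟨A, hst.trans h1, h2⟩
    · rintro s t ⟨A, hsA, hA1, hA2⟩ ⟨B, htB, hB1, hB2⟩
      have e : ∀ h : Kˣ → ℂ, h * (A ∪ B).indicator 1 = h * A.indicator 1 + h * B.indicator 1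
          - h * A.indicator 1 * B.indicator 1 := by
        intro h
        funext x
        by_cases h1 : x ∈ A <;> by_cases h2 : x ∈ B <;> simp [h1, h2]
      refine ⟨A ∪ B, Set.union_subset_union hsA htB, fun h hh => ?_, ?_⟩
      · rw [e]
        exact U.sub_mem (U.add_mem (hA1 h hh) (hB1 h hh)) (hB1 _ (hA1 h hh))
      · rw [e]
        exact U.sub_mem (U.add_mem hA2 hB2) (hB1 _ hA2)
    · intro y _
      obtain ⟨δ, hδ, hball⟩ := ballI_mem hψlc hx hU hUC hne y
      have ho : IsOpen (((↑) : Kˣ → K) '' {x | f x = f y}) :=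
        Units.isOpenEmbedding_val.isOpenMap _ (hlc.isOpen_fiber (f y))
      obtain ⟨δ', hδ', hb⟩ := Metric.isOpen_iff.1 ho y ⟨y, rfl, rfl⟩
      set r := min δ δ' with hr
      have hr0 : 0 < r := lt_min hδ hδ'
      have hI : ({x : Kˣ | (x : K) ∈ Metric.ball (y : K) r}.indicator 1 : Kˣ → ℂ)
          = ballI (y : K) r := by
        funext x
        simp [Set.indicator, ballI]
      refine ⟨{x : Kˣ | (x : K) ∈ Metric.ball (y : K) r}, ?_,
        {x : Kˣ | (x : K) ∈ Metric.ball (y : K) r}, subset_rfl, ?_, ?_⟩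
      · refine mem_nhdsWithin_of_mem_nhds ?_
        exact (Metric.isOpen_ball.preimage Units.continuous_val).mem_nhds
          (by simpa using hr0)
      · intro h hh
        rw [hI]; exact mul_ballI_mem hx hU hUC hh _ hr0
      · rw [hI]
        have : f * ballI (y : K) r = f y • ballI (y : K) r := by
          funext x
          simp only [Pi.mul_apply, Pi.smul_apply, smul_eq_mul, ballI]
          split_ifs with h
          · obtain ⟨z, hz, hz'⟩ := hb (Metric.ball_subset_ball (min_le_right _ _) h)
            rw [← Units.ext hz', show f z = f y from hz]
          · simp
        rw [this]
        exact U.smul_mem _ (hball r hr0 (min_le_left _ _))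
  obtain ⟨A, h1, -, h2⟩ := key
  convert h2 using 1
  funext x
  by_cases hfx : f x = 0
  · simp [hfx]
  · have : x ∈ A := h1 (subset_tsupport f hfx)
    simp [this]

end Fun

/-! ### Models and irreducible modules -/

section Mod

set_option linter.unusedSectionVars false

open Aff

variable {K : Type*} [NontriviallyNormedField K] [IsUltrametricDist K] [ProperSpace K]
variable {V : Type*} [AddCommGroup V] [Module ℂ V]

/-- The map to functions on `k^×` attached to a functional. -/
def Phi (ρ : Rep K V) (l : V →ₗ[ℂ] ℂ) : V →ₗ[ℂ] (Kˣ → ℂ) :=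
  LinearMap.pi fun u => l.comp (ρ (xT u))

lemma Phi_apply (ρ : Rep K V) (l : V →ₗ[ℂ] ℂ) (v : V) (u : Kˣ) :
    Phi ρ l v u = l (ρ (xT u) v) := rfl

lemma Phi_equivariant (ρ : Rep K V) {ψ : AddChar K ℂ} (l : V →ₗ[ℂ] ℂ)
    (hl : ∀ b v, l (ρ (sS b) v) = ψ b * l v) : GRep.Equivariant ρ (repCx K ψ) (Phi ρ l) := by
  intro g v
  funext x
  rw [repCx_apply, Phi_apply, Phi_apply, rep_decomp ρ g v, rep_t_s, hl, ← rep_t_mul, mul_comm g.s]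

lemma Phi_Cb {ρ : Rep K V} (hρ : IsSmoothRep ρ) {ψ : AddChar K ℂ} {x₁ : K} (hx : MinNT ψ x₁)
    (l : V →ₗ[ℂ] ℂ) (hl : ∀ b v, l (ρ (sS b) v) = ψ b * l v) (v : V) : Phi ρ l v ∈ Cb K := by
  rw [Cb_iff]
  constructor
  · rw [IsLocallyConstant.iff_exists_open]
    intro u
    refine ⟨(fun y => u⁻¹ * y) ⁻¹' {w : Kˣ | ρ (xT w) v = v},
      (smooth_t hρ v).preimage (continuous_const.mul continuous_id), ?_, ?_⟩
    · simp [rep_t_one]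
    · intro y hy
      have hy' : ρ (xT (u⁻¹ * y)) v = v := hy
      rw [Phi_apply, Phi_apply]
      conv_rhs => rw [← hy', ← rep_t_mul, mul_inv_cancel_left]
  · obtain ⟨ε, hε, hs⟩ := smooth_s hρ v
    refine ⟨‖x₁‖ / ε, fun u hu => ?_⟩
    by_contra hlt
    rw [not_le] at hlt
    have hu0 : 0 < ‖(u : K)‖ := norm_pos_iff.2 u.ne_zero
    have h1 : ‖x₁ / u‖ < ε := by
      rw [norm_div, div_lt_iff₀ hu0]
      rw [div_lt_iff₀ hε] at hlt
      linarith
    have h2 : Phi ρ l v u = ψ x₁ * Phi ρ l v u := by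
      conv_lhs => rw [← hs _ h1]
      rw [Phi_apply, rep_t_s, hl, mul_div_cancel₀ _ u.ne_zero]; rfl
    exact hx.1 (mul_right_cancel₀ hu (h2.symm.trans (one_mul _).symm))

lemma iso_of_irred {σ : Rep K V} (hσ : IsSmoothRep σ) (hirr : GRep.Irred σ)
    {ψ : AddChar K ℂ} (hψlc : IsLocallyConstant (⇑ψ)) {x₁ : K} (hx : MinNT ψ x₁)
    (hS : ¬ ∀ b v, σ (sS b) v = v) : GRep.Iso σ (SRep ψ hψlc) := by
  obtain ⟨b₀, w₀, hbw⟩ : ∃ b v, σ (sS b) v ≠ v := by push Not at hS; exact hS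
  obtain ⟨v, hv⟩ : ∃ v, v = σ (sS b₀) w₀ - w₀ := ⟨_, rfl⟩
  have hv0 : v ≠ 0 := hv ▸ sub_ne_zero.2 hbw
  have hvS : v ∈ sCoinvKer σ := Submodule.subset_span ⟨b₀, w₀, hv⟩
  obtain ⟨θ, hθ⟩ := exists_char (sRes σ) hv0 (fun g => by
    obtain ⟨M, h1, h2, -⟩ := smooth_fin hσ 1 one_pos (fun _ _ => rfl) g v
    exact ⟨M, h1, h2⟩)
  let θ' : AddChar K ℂ :=
    { toFun := fun b => θ (Multiplicative.ofAdd b)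
      map_zero_eq_one' := by simp
      map_add_eq_mul' := fun a b => by simp [ofAdd_add] }
  obtain ⟨ε, hε, hs⟩ := smooth_s hσ v
  obtain ⟨a, ha⟩ := exists_dual hψlc hx θ' hε (fun b hb => by
    have h1 := hθ (MonoidAlgebra.of ℂ _ (Multiplicative.ofAdd b) - 1) (by
      rw [map_sub, act_of, map_one, LinearMap.sub_apply, sRes_apply]
      simp [hs b hb])
    rw [map_sub, evc_of, map_one, sub_eq_zero] at h1
    exact h1)
  have hθa : θ = psiAt ψ a := by
    apply MonoidHom.ext
    intro b
    exact ha (Multiplicative.toAdd b)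
  subst hθa
  have ha0 : a ≠ 0 := by
    rintro rfl
    obtain ⟨α, h1, h2⟩ := (mem_sCoinvKer_iff hσ ψ v).1 hvS
    exact h2 (hθ α h1)
  have hnot : v ∉ twKer (sRes σ) (psiAt ψ a) := by
    intro h
    obtain ⟨α, h1, h2⟩ := (mem_twKer_psi_iff hσ hψlc a v).1 h
    exact h2 (hθ α h1)
  obtain ⟨l, hl1, hl2⟩ := Submodule.exists_dual_map_eq_bot_of_notMem hnot inferInstance
  have hl3 : ∀ b w, l (σ (sS b) w) = ψ (b * a) * l w := by
    intro b w
    have hmem : σ (sS b) w - ψ (b * a) • w ∈ twKer (sRes σ) (psiAt ψ a) :=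
      Submodule.subset_span ⟨Multiplicative.ofAdd b, w, rfl⟩
    have : l (σ (sS b) w - ψ (b * a) • w) ∈ (twKer (sRes σ) (psiAt ψ a)).map l :=
      ⟨_, hmem, rfl⟩
    rw [hl2, Submodule.mem_bot, map_sub, sub_eq_zero, map_smul] at this
    exact this
  let ua := Units.mk0 a ha0
  let l' : V →ₗ[ℂ] ℂ := l.comp (σ (xT ua⁻¹))
  have hl' : ∀ b w, l' (σ (sS b) w) = ψ b * l' w := by
    intro b w
    show l (σ (xT ua⁻¹) (σ (sS b) w)) = ψ b * l (σ (xT ua⁻¹) w)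
    rw [rep_t_s, hl3]
    congr 2
    simp [ua]; field_simp
  have hΦ := Phi_equivariant σ l' hl'
  have hCb := Phi_Cb hσ hx l' hl'
  set Φ := Phi σ l' with hΦdef
  have hker : LinearMap.ker Φ = ⊥ := by
    refine (hirr.2 _ (GRep.ker_invariant _ _ _ hΦ)).resolve_right ?_
    intro h
    have h1 : σ (xT ua) v ∈ LinearMap.ker Φ := h ▸ Submodule.mem_top
    have h2 := congrFun (LinearMap.mem_ker.1 h1) 1
    rw [hΦdef, Phi_apply, rep_t_one] at h2
    apply hl1
    have h3 : l' (σ (xT ua) v) = l v := by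
      show l (σ (xT ua⁻¹) (σ (xT ua) v)) = l v
      rw [rep_t_inv]
    rw [← h3]; exact h2
  have hinj : Function.Injective Φ := LinearMap.ker_eq_bot.1 hker
  have hcomap : (SSx K).comap Φ = ⊤ := by
    refine (hirr.2 _ ?_).resolve_left ?_
    · intro g w hw
      rw [Submodule.mem_comap] at hw ⊢
      rw [hΦ]
      exact SSx_invariant ψ hψlc g _ hw
    · intro h
      have h1 : v ∈ (SSx K).comap Φ := by
        rw [Submodule.mem_comap, hv, map_sub, hΦ]
        exact Cb_sub_mem hψlc (hCb w₀) b₀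
      rw [h] at h1
      exact hv0 ((Submodule.mem_bot ℂ).1 h1)
  have hmem : ∀ w, Φ w ∈ SSx K := fun w => by
    have : w ∈ (SSx K).comap Φ := hcomap ▸ Submodule.mem_top
    exact this
  have hsurj : SSx K ≤ LinearMap.range Φ := by
    refine SSx_le_of_invariant hψlc hx (GRep.range_invariant _ _ _ hΦ) ?_ ?_
    · rintro _ ⟨w, rfl⟩; exact hCb w
    · intro h
      have h1 : Φ v ∈ LinearMap.range Φ := ⟨v, rfl⟩
      rw [h, Submodule.mem_bot] at h1
      exact hv0 (hinj (h1.trans (map_zero Φ).symm))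
  refine ⟨LinearEquiv.ofBijective (Φ.codRestrict (SSx K) hmem) ⟨?_, ?_⟩, ?_⟩
  · intro x y hxy
    exact hinj (congrArg Subtype.val hxy)
  · rintro ⟨f, hf⟩
    obtain ⟨w, hw⟩ := hsurj hf
    exact ⟨w, Subtype.ext hw⟩
  · intro g w
    apply Subtype.ext
    exact hΦ g w

lemma exists_annulus_rep {U : Set Kˣ} (hU : IsOpen U) (h1 : (1 : Kˣ) ∈ U) {ϖ : Kˣ}
    (hϖ : ‖(ϖ : K)‖ < 1) : ∃ t : Finset Kˣ, ∀ g : Kˣ, ∃ a ∈ t, ∃ n : ℤ, a⁻¹ * (g * ϖ ^ n) ∈ U := by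
  have hϖ0 : 0 < ‖(ϖ : K)‖ := norm_pos_iff.2 ϖ.ne_zero
  obtain ⟨t, -, ht⟩ := (isCompact_annulus (K := K) hϖ0 1).elim_nhds_subcover
    (fun a => (fun y => a⁻¹ * y) ⁻¹' U) (fun a _ =>
      (hU.preimage (continuous_const.mul continuous_id)).mem_nhds (by simpa using h1))
  refine ⟨t, fun g => ?_⟩
  have hg0 : 0 < ‖(g : K)‖ := norm_pos_iff.2 g.ne_zero
  obtain ⟨n, hn1, hn2⟩ := exists_mem_Ico_zpow hg0 ((one_lt_inv₀ hϖ0).2 hϖ)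
  have hmem : g * ϖ ^ (n + 1) ∈ {u : Kˣ | ‖(ϖ : K)‖ ≤ ‖(u : K)‖ ∧ ‖(u : K)‖ ≤ 1} := by
    have hpos : 0 < ‖(ϖ : K)‖ ^ (n + 1) := zpow_pos hϖ0 _
    have e : ‖((g * ϖ ^ (n + 1) : Kˣ) : K)‖ = ‖(g : K)‖ * ‖(ϖ : K)‖ ^ (n + 1) := by simp
    show _ ≤ ‖((g * ϖ ^ (n + 1) : Kˣ) : K)‖ ∧ ‖((g * ϖ ^ (n + 1) : Kˣ) : K)‖ ≤ 1
    rw [e]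
    rw [inv_zpow] at hn1 hn2
    constructor
    · calc ‖(ϖ : K)‖ = (‖(ϖ : K)‖ ^ n)⁻¹ * ‖(ϖ : K)‖ ^ (n + 1) := by
            rw [zpow_add_one₀ hϖ0.ne', inv_mul_cancel_left₀ (zpow_pos hϖ0 _).ne']
        _ ≤ _ := by gcongr
    · calc _ ≤ (‖(ϖ : K)‖ ^ (n + 1))⁻¹ * ‖(ϖ : K)‖ ^ (n + 1) := by gcongr
        _ = 1 := inv_mul_cancel₀ hpos.ne'
  have h3 := ht hmem
  simp only [Set.mem_iUnion, Set.mem_preimage] at h3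
  obtain ⟨a, ha, h4⟩ := h3
  exact ⟨a, ha, n + 1, h4⟩

lemma exists_unif (K : Type*) [NontriviallyNormedField K] : ∃ ϖ : Kˣ, ‖(ϖ : K)‖ < 1 := by
  obtain ⟨y, hy, hy'⟩ := NormedField.exists_norm_lt_one K
  exact ⟨Units.mk0 y (norm_pos_iff.1 hy), hy'⟩

lemma fin_of_trivS {σ : Rep K V} (hσ : IsSmoothRep σ) (hirr : GRep.Irred σ)
    (hS : ∀ b v, σ (sS b) v = v) : Module.Finite ℂ V := by
  obtain ⟨ϖ, hϖ⟩ := exists_unif K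
  have hirr' : GRep.Irred (σ.comp xTHom) := by
    refine ⟨hirr.1, fun U hU => hirr.2 U ?_⟩
    exact invariant_of σ U (fun b v hv => by rw [hS]; exact hv) (fun u v hv => hU u v hv)
  have := hirr.1
  obtain ⟨v, hv⟩ := exists_ne (0 : V)
  have hspan : Submodule.span ℂ (Set.range fun u : Kˣ => σ (xT u) v) = ⊤ := by
    refine (hirr'.2 _ ?_).resolve_left ?_
    · intro g w hw
      have hle : Submodule.span ℂ (Set.range fun u : Kˣ => σ (xT u) v) ≤
          (Submodule.span ℂ (Set.range fun u : Kˣ => σ (xT u) v)).comap (σ (xT g)) := by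
        refine Submodule.span_le.2 ?_
        rintro _ ⟨u, rfl⟩
        exact Submodule.subset_span ⟨g * u, rep_t_mul _ _ _ _⟩
      exact hle hw
    · intro h
      apply hv
      rw [← Submodule.mem_bot ℂ, ← h]
      exact Submodule.subset_span ⟨1, rep_t_one _ _⟩
  have htriv : ∀ u, σ (xT u) v = v → σ (xT u) = 1 := by
    intro u hu
    have hle : Submodule.span ℂ (Set.range fun u : Kˣ => σ (xT u) v) ≤
        LinearMap.ker (σ (xT u) - 1) := by
      refine Submodule.span_le.2 ?_
      rintro _ ⟨w, rfl⟩
      simp only [SetLike.mem_coe, LinearMap.mem_ker, LinearMap.sub_apply, Module.End.one_apply]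
      rw [rep_t_comm, hu, sub_self]
    rw [hspan, top_le_iff, LinearMap.ker_eq_top, sub_eq_zero] at hle
    exact hle
  obtain ⟨t, ht⟩ := exists_annulus_rep (smooth_t hσ v) (rep_t_one σ v) hϖ
  refine finite_of_irred (σ.comp xTHom) hirr' (insert ϖ (insert ϖ⁻¹ t)) ?_
  intro g
  obtain ⟨a, ha, n, hn⟩ := ht g
  have h1 : ∀ m : ℤ, ϖ ^ m ∈ Submonoid.closure
      ((insert ϖ (insert ϖ⁻¹ t) : Finset Kˣ) : Set Kˣ) := by
    intro m
    obtain ⟨k, rfl | rfl⟩ := m.eq_nat_or_neg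
    · rw [zpow_natCast]
      exact Submonoid.pow_mem _ (Submonoid.subset_closure (by simp)) _
    · rw [zpow_neg, zpow_natCast, ← inv_pow]
      exact Submonoid.pow_mem _ (Submonoid.subset_closure (by simp)) _
  refine ⟨a * ϖ ^ (-n), Submonoid.mul_mem _ (Submonoid.subset_closure (by simp [ha])) (h1 _), ?_⟩
  have h2 := htriv _ hn
  show σ (xT g) = σ (xT (a * ϖ ^ (-n)))
  have h3 : g = (a⁻¹ * (g * ϖ ^ n)) * (a * ϖ ^ (-n)) := by
    rw [zpow_neg]
    rw [mul_assoc, mul_mul_mul_comm g, ← mul_assoc a⁻¹]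
    simp [mul_comm a⁻¹]
  conv_lhs => rw [h3]
  ext w
  rw [rep_t_mul, h2]; rfl

lemma subquot_irred {ρ : Rep K V} (c : CompSeries ρ) {i : ℕ} (hi : i < c.n) :
    GRep.Irred (GRep.subquot ρ (c.inv i) (c.inv (i + 1))) := by
  have hlt := c.lt i hi
  constructor
  · rw [Submodule.Quotient.nontrivial_iff]
    intro h
    rw [Submodule.comap_subtype_eq_top] at h
    exact absurd h (not_le_of_gt hlt)
  · intro U hU
    let C : Submodule ℂ V :=
      (U.comap ((c.W i).comap (c.W (i + 1)).subtype).mkQ).map (c.W (i + 1)).subtype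
    have hC : GRep.Invariant ρ C := by
      rintro g _ ⟨w, hw, rfl⟩
      exact ⟨GRep.sub ρ (c.inv (i + 1)) g w, hU g _ hw, rfl⟩
    have h1 : c.W i ≤ C := by
      intro w hw
      refine ⟨⟨w, hlt.le hw⟩, ?_, rfl⟩
      show Submodule.Quotient.mk _ ∈ U
      rw [(Submodule.Quotient.mk_eq_zero _).2]
      · exact U.zero_mem
      · exact hw
    have h2 : C ≤ c.W (i + 1) := Submodule.map_subtype_le _ _
    rcases c.maximal i hi C hC h1 h2 with h | h
    · left
      rw [eq_bot_iff]
      intro q hq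
      obtain ⟨w, rfl⟩ := Submodule.Quotient.mk_surjective _ q
      rw [Submodule.mem_bot, Submodule.Quotient.mk_eq_zero]
      show (w : V) ∈ c.W i
      rw [← h]
      exact ⟨w, hq, rfl⟩
    · right
      rw [eq_top_iff]
      intro q _
      obtain ⟨w, rfl⟩ := Submodule.Quotient.mk_surjective _ q
      have h3 : (w : V) ∈ C := by rw [h]; exact w.2
      obtain ⟨w', hw', he⟩ := h3
      rw [← Subtype.ext (a1 := w') (a2 := w) he]
      exact hw'

lemma piZero_finite {ρ : Rep K V} (hρ : IsSmoothRep ρ) (c : CompSeries ρ) :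
    Module.Finite ℂ (V ⧸ sCoinvKer ρ) := by
  have key : ∀ i ≤ c.n, ∃ F : Submodule ℂ V, FiniteDimensional ℂ F ∧ c.W i ≤ F ⊔ sCoinvKer ρ := by
    intro i
    induction i with
    | zero => intro _; exact ⟨⊥, inferInstance, by rw [c.bot]; exact bot_le⟩
    | succ i ih =>
      intro hi
      obtain ⟨F, hF, hFi⟩ := ih (by omega)
      have hirr := subquot_irred c (i := i) (by omega)
      have hsm := smooth_subquot hρ (c.inv i) (c.inv (i + 1))
      rcases hirr.2 _ (sCoinvKer_invariant _) with h | h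
      · have hS : ∀ b v, GRep.subquot ρ (c.inv i) (c.inv (i + 1)) (sS b) v = v := by
          intro b v
          rw [← sub_eq_zero, ← Submodule.mem_bot ℂ, ← h]
          exact Submodule.subset_span ⟨b, v, rfl⟩
        have hfin := fin_of_trivS hsm hirr hS
        obtain ⟨s, hs⟩ := ((c.W i).comap (c.W (i + 1)).subtype).mkQ.exists_rightInverse_of_surjective
          (LinearMap.range_eq_top.2 (Submodule.mkQ_surjective _))
        refine ⟨F ⊔ LinearMap.range ((c.W (i + 1)).subtype.comp s), inferInstance, ?_⟩
        intro w hw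
        let q := ((c.W i).comap (c.W (i + 1)).subtype).mkQ ⟨w, hw⟩
        have h1 : w - (s q : V) ∈ c.W i := by
          have h2 : ((c.W i).comap (c.W (i + 1)).subtype).mkQ (⟨w, hw⟩ - s q) = 0 := by
            rw [map_sub, sub_eq_zero]
            exact (LinearMap.congr_fun hs q).symm
          rw [Submodule.mkQ_apply, Submodule.Quotient.mk_eq_zero] at h2
          exact h2
        have h3 : (s q : V) ∈ LinearMap.range ((c.W (i + 1)).subtype.comp s) := ⟨q, rfl⟩
        have h4 : w = (w - s q) + s q := by abel
        rw [h4]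
        refine Submodule.add_mem _ ?_ ?_
        · exact (sup_le_sup_right le_sup_left _ : F ⊔ sCoinvKer ρ ≤ _) (hFi h1)
        · exact Submodule.mem_sup_left (Submodule.mem_sup_right h3)
      · refine ⟨F, hF, ?_⟩
        have hle : sCoinvKer (GRep.subquot ρ (c.inv i) (c.inv (i + 1))) ≤
            ((sCoinvKer ρ).comap (c.W (i + 1)).subtype).map
              ((c.W i).comap (c.W (i + 1)).subtype).mkQ := by
          refine Submodule.span_le.2 ?_
          rintro _ ⟨b, q, rfl⟩
          obtain ⟨w, rfl⟩ := Submodule.Quotient.mk_surjective _ q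
          refine ⟨GRep.sub ρ (c.inv (i + 1)) (sS b) w - w, ?_, rfl⟩
          exact Submodule.subset_span ⟨b, w, rfl⟩
        intro w hw
        have h1 : ((c.W i).comap (c.W (i + 1)).subtype).mkQ ⟨w, hw⟩ ∈
            sCoinvKer (GRep.subquot ρ (c.inv i) (c.inv (i + 1))) := h ▸ Submodule.mem_top
        obtain ⟨w', hw', he⟩ := hle h1
        have h2 : w - (w' : V) ∈ c.W i := by
          have h3 := sub_eq_zero.2 he.symm
          rw [← map_sub, Submodule.mkQ_apply, Submodule.Quotient.mk_eq_zero] at h3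
          exact h3
        have h4 : w = (w - w') + w' := by abel
        rw [h4]
        exact Submodule.add_mem _ (hFi h2) (Submodule.mem_sup_right hw')
  obtain ⟨F, hF, h⟩ := key c.n le_rfl
  refine Module.Finite.of_surjective ((sCoinvKer ρ).mkQ.comp F.subtype) ?_
  intro q
  obtain ⟨v, rfl⟩ := Submodule.Quotient.mk_surjective _ q
  have hv : v ∈ F ⊔ sCoinvKer ρ := h (c.top ▸ Submodule.mem_top)
  obtain ⟨f, hf, k, hk, rfl⟩ := Submodule.mem_sup.1 hv
  refine ⟨⟨f, hf⟩, ?_⟩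
  show Submodule.Quotient.mk f = _
  rw [Submodule.Quotient.eq]
  simpa using hk

end Mod

/-! ### Modules of degree one -/

section DegOne

set_option linter.unusedSectionVars false

open Aff

variable {K : Type*} [NontriviallyNormedField K] [IsUltrametricDist K] [ProperSpace K]
variable {V : Type*} [AddCommGroup V] [Module ℂ V]

lemma exists_extension {ρ : Rep K V} (hρ : IsSmoothRep ρ) {ψ : AddChar K ℂ}
    (hψlc : IsLocallyConstant (⇑ψ)) {B : Submodule ℂ V} (hB : GRep.Invariant ρ B)
    (l₀ : B →ₗ[ℂ] ℂ) (hl₀ : ∀ b w, l₀ (GRep.sub ρ hB (sS b) w) = ψ b * l₀ w) :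
    ∃ l : V →ₗ[ℂ] ℂ, (∀ b v, l (ρ (sS b) v) = ψ b * l v) ∧ ∀ w : B, l w = l₀ w := by
  let N := twKer (sRes ρ) (psiAt ψ 1)
  let j : B →ₗ[ℂ] (V ⧸ N) := N.mkQ.comp B.subtype
  have hker : LinearMap.ker j ≤ LinearMap.ker l₀ := by
    intro w hw
    rw [LinearMap.mem_ker] at hw ⊢
    have hw' : (w : V) ∈ N := (Submodule.Quotient.mk_eq_zero N).1 hw
    obtain ⟨α, h1, h2⟩ := (mem_twKer_psi_iff hρ hψlc 1 _).1 hw'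
    have h3 : act (sRes (GRep.sub ρ hB)) α w = 0 := by
      apply Subtype.ext
      have := act_equivariant (sRes (GRep.sub ρ hB)) (sRes ρ) B.subtype (fun g x => rfl) α w
      rw [Submodule.subtype_apply, Submodule.subtype_apply, h1] at this
      exact this
    have h4 := act_functional (sRes (GRep.sub ρ hB)) (psiAt ψ 1) l₀ (fun g x => by
      rw [sRes_apply, hl₀, psiAt_apply, mul_one]) α w
    rw [h3, map_zero] at h4
    exact (mul_eq_zero.1 h4.symm).resolve_left h2
  have hmem : l₀ ∈ LinearMap.range j.dualMap := by
    rw [LinearMap.range_dualMap_eq_dualAnnihilator_ker, Submodule.mem_dualAnnihilator]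
    exact fun w hw => hker hw
  obtain ⟨m, hm⟩ := hmem
  refine ⟨m.comp N.mkQ, fun b v => ?_, fun w => ?_⟩
  · have h1 : ρ (sS b) v - ψ b • v ∈ N :=
      Submodule.subset_span ⟨Multiplicative.ofAdd b, v, by simp [sRes_apply, psiAt_apply]⟩
    have h2 : N.mkQ (ρ (sS b) v) = ψ b • N.mkQ v := by
      rw [← map_smul, ← sub_eq_zero, ← map_sub]
      exact (Submodule.Quotient.mk_eq_zero N).2 h1
    simp only [LinearMap.comp_apply, h2, map_smul, smul_eq_mul]
  · rw [← hm]; rfl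

lemma exists_model {ρ : Rep K V} (hρ : IsSmoothRep ρ) {ψ : AddChar K ℂ}
    (hψlc : IsLocallyConstant (⇑ψ)) {x₁ : K} (hx : MinNT ψ x₁) (c : CompSeries ρ)
    (hdeg : c.deg (SRep ψ hψlc) = 1) :
    ∃ Φ : V →ₗ[ℂ] (Kˣ → ℂ), GRep.Equivariant ρ (repCx K ψ) Φ ∧ (∀ v, Φ v ∈ Cb K) ∧
      LinearMap.ker Φ ≤ sInv ρ := by
  unfold CompSeries.deg at hdeg
  obtain ⟨i₀, hi₀⟩ := Finset.card_eq_one.1 hdeg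
  have hiso : GRep.Iso (GRep.subquot ρ (c.inv i₀.1) (c.inv (i₀.1 + 1))) (SRep ψ hψlc) := by
    have : i₀ ∈ ({i₀} : Finset (Fin c.n)) := Finset.mem_singleton_self _
    rw [← hi₀, Finset.mem_filter] at this
    exact this.2
  have hother : ∀ i (hi : i < c.n), i ≠ i₀.1 → ∀ b v,
      GRep.subquot ρ (c.inv i) (c.inv (i + 1)) (sS b) v = v := by
    intro i hi hne
    by_contra hS
    have h1 := iso_of_irred (smooth_subquot hρ (c.inv i) (c.inv (i + 1)))
      (subquot_irred c hi) hψlc hx hS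
    have h2 : (⟨i, hi⟩ : Fin c.n) ∈ ({i₀} : Finset (Fin c.n)) := by
      rw [← hi₀, Finset.mem_filter]; exact ⟨Finset.mem_univ _, h1⟩
    rw [Finset.mem_singleton] at h2
    exact hne (congrArg Fin.val h2)
  obtain ⟨e, he⟩ := hiso
  let A := c.W i₀.1
  let B := c.W (i₀.1 + 1)
  have hB : GRep.Invariant ρ B := c.inv (i₀.1 + 1)
  let q : B →ₗ[ℂ] ↥(SSx K) := e.toLinearMap.comp (A.comap B.subtype).mkQ
  have hq : ∀ g w, q (GRep.sub ρ hB g w) = SRep ψ hψlc g (q w) := fun g w => he g (Submodule.Quotient.mk w)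
  let l₀ : B →ₗ[ℂ] ℂ := (LinearMap.proj (1 : Kˣ)).comp ((SSx K).subtype.comp q)
  have hl₀ : ∀ w, l₀ w = (q w : Kˣ → ℂ) 1 := fun w => rfl
  obtain ⟨l, hl, hl'⟩ := exists_extension hρ hψlc hB l₀ (fun b w => by
    rw [hl₀, hl₀, hq]
    show repCx K ψ (sS b) (q w : Kˣ → ℂ) 1 = _
    simp)
  refine ⟨Phi ρ l, Phi_equivariant ρ l hl, Phi_Cb hρ hx l hl, ?_⟩
  have hkerB : ∀ w : B, Phi ρ l w = 0 → (w : V) ∈ A := by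
    intro w hw
    have h1 : q w = 0 := by
      apply Subtype.ext
      funext u
      have h2 := congrFun hw u
      rw [Phi_apply] at h2
      have h3 := hl' (GRep.sub ρ hB (xT u) w)
      rw [GRep.sub_apply, h2, hl₀, hq] at h3
      have h4 : (SRep ψ hψlc (xT u) (q w) : Kˣ → ℂ) 1 = (q w : Kˣ → ℂ) u := by
        show repCx K ψ (xT u) (q w : Kˣ → ℂ) 1 = _
        simp
      rw [h4] at h3
      exact h3.symm
    have h5 : (A.comap B.subtype).mkQ w = 0 := by
      apply e.injective
      rw [map_zero]; exact h1
    exact (Submodule.Quotient.mk_eq_zero (A.comap B.subtype)).1 h5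
  have key : ∀ i ≤ c.n, ∀ v ∈ c.W i, Phi ρ l v = 0 → v ∈ sInv ρ := by
    intro i
    induction i with
    | zero =>
      intro _ v hv _
      rw [c.bot, Submodule.mem_bot] at hv
      rw [hv]; exact Submodule.zero_mem _
    | succ i ih =>
      intro hi v hv hv0
      by_cases hii : i = i₀.1
      · subst hii
        exact ih (by omega) v (hkerB ⟨v, hv⟩ hv0) hv0
      · intro b
        apply sub_eq_zero_of_fixed hρ
        have h1 := hother i (by omega) hii b (Submodule.Quotient.mk ⟨v, hv⟩)
        have h2 : ρ (sS b) v - v ∈ c.W i := by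
          rw [← sub_eq_zero] at h1
          exact (Submodule.Quotient.mk_eq_zero ((c.W i).comap (c.W (i + 1)).subtype)).1 h1
        refine ih (by omega) _ h2 ?_ b
        rw [map_sub, Phi_equivariant ρ l hl, hv0]; simp
  intro v hv
  exact key c.n le_rfl v (c.top ▸ Submodule.mem_top) hv

lemma sInv_eq_bot {ρ : Rep K V} (hρ : IsSmoothRep ρ) (c : CompSeries ρ) (hp : Perfect ρ) :
    sInv ρ = ⊥ := by
  by_contra hne
  have hfin := piZero_finite hρ c
  have hfd : FiniteDimensional ℂ (sInv ρ) := by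
    refine Module.Finite.of_injective ((sCoinvKer ρ).mkQ.comp (sInv ρ).subtype) ?_
    rw [← LinearMap.ker_eq_bot, LinearMap.ker_eq_bot']
    intro v hv
    apply Subtype.ext
    exact sInv_inf_sCoinvKer hρ v.2 ((Submodule.Quotient.mk_eq_zero _).1 hv)
  obtain ⟨y, -, hy0, hy⟩ := exists_common_eigen (ρ.comp xTHom) _ (sInv ρ)
    (fun u v hv => sInv_invariant ρ (xT u) v hv) hne hfd rfl
  choose χ₀ hχ₀ using hy
  have hχ₀' : ∀ u, ρ (xT u) y = χ₀ u • y := hχ₀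
  have hinj : ∀ a b : ℂ, a • y = b • y → a = b := fun a b h => smul_left_injective ℂ hy0 h
  let χ₁ : Kˣ →* ℂ :=
    { toFun := χ₀
      map_one' := hinj _ _ (by rw [← hχ₀', rep_t_one, one_smul])
      map_mul' := fun a b => hinj _ _ (by
        rw [← hχ₀', rep_t_mul, hχ₀', map_smul, hχ₀', smul_smul, mul_comm]) }
  let χ : Kˣ →* ℂˣ := χ₁.toHomUnits
  have hχ : ∀ u, (χ u : ℂ) = χ₀ u := fun u => rfl
  have hsm : SmoothMulChar χ := by
    have : {u : Kˣ | χ u = 1} = {u : Kˣ | ρ (xT u) y = y} := by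
      ext u
      constructor
      · intro h
        have h' : (χ u : ℂ) = 1 := by rw [show χ u = 1 from h]; rfl
        show ρ (xT u) y = y
        rw [hχ₀', ← hχ, h', one_smul]
      · intro h
        apply Units.ext
        apply hinj
        rw [hχ, ← hχ₀', Units.val_one, one_smul]; exact h
    unfold SmoothMulChar
    rw [this]
    exact smooth_t hρ y
  have hmem : y ∈ tEigen ρ χ := fun u => hχ₀' u
  rw [hp χ hsm, Submodule.mem_bot] at hmem
  exact hy0 hmem

lemma germ_eigen (ψ : AddChar K ℂ) (χ : Kˣ →* ℂˣ) {φ : Kˣ → ℂ} (hφ : φ ∈ Cb K)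
    (hsm : IsOpen {u : Kˣ | repCx K ψ (xT u) φ = φ})
    (h : ∀ u, repCx K ψ (xT u) φ - (χ u : ℂ) • φ ∈ SSx K) :
    ∃ c : ℂ, ∃ ε > 0, ∀ x : Kˣ, ‖(x : K)‖ < ε → φ x = c * χ x := by
  by_cases hS : φ ∈ SSx K
  · obtain ⟨ε, hε, h0⟩ := SSx_vanish hS
    exact ⟨0, ε, hε, fun x hx => by rw [h0 x hx, zero_mul]⟩
  have hχU : ∀ u, repCx K ψ (xT u) φ = φ → (χ u : ℂ) = 1 := by
    intro u hu
    by_contra hne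
    have h1 := h u
    rw [hu] at h1
    have h2 : φ - (χ u : ℂ) • φ = (1 - (χ u : ℂ)) • φ := by rw [sub_smul, one_smul]
    rw [h2, Submodule.smul_mem_iff _ (sub_ne_zero.2 (Ne.symm hne))] at h1
    exact hS h1
  let H : Kˣ → ℂ := fun x => φ x * ((χ x)⁻¹ : ℂˣ)
  have hHU : ∀ u, repCx K ψ (xT u) φ = φ → ∀ x, H (x * u) = H x := by
    intro u hu x
    have h1 : φ (x * u) = φ x := by
      have := congrFun hu x
      simpa using this
    have h2 : χ u = 1 := Units.ext (hχU u hu)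
    simp only [H, h1, map_mul, h2, mul_one]
  have hHloc : ∀ u, ∃ ε > 0, ∀ x : Kˣ, ‖(x : K)‖ < ε → H (x * u) = H x := by
    intro u
    obtain ⟨ε, hε, h0⟩ := SSx_vanish (h u)
    refine ⟨ε, hε, fun x hx => ?_⟩
    have h1 := h0 x hx
    simp only [Pi.sub_apply, repCx_apply, xT_s, xT_t, zero_mul, AddChar.map_zero_eq_one, one_mul,
      Pi.smul_apply, smul_eq_mul, sub_eq_zero] at h1
    simp only [H, h1, map_mul, mul_inv, Units.val_mul, Units.val_inv_eq_inv_val]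
    have h2 : (χ u : ℂ) ≠ 0 := (χ u).ne_zero
    have h3 : (χ x : ℂ) ≠ 0 := (χ x).ne_zero
    field_simp
  obtain ⟨ϖ, hϖ⟩ := exists_unif K
  obtain ⟨t, ht⟩ := exists_annulus_rep hsm (rep_t_one _ φ) hϖ
  have hunif : ∀ s : Finset Kˣ, ∃ ε > 0, ∀ u ∈ s, ∀ x : Kˣ, ‖(x : K)‖ < ε → H (x * u) = H x := by
    intro s
    induction s using Finset.induction_on with
    | empty => exact ⟨1, one_pos, by simp⟩
    | insert a s _ ih =>
      obtain ⟨ε, hε, h1⟩ := ih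
      obtain ⟨ε', hε', h2⟩ := hHloc a
      refine ⟨min ε ε', lt_min hε hε', fun u hu x hx => ?_⟩
      rcases Finset.mem_insert.1 hu with rfl | hu
      · exact h2 x (hx.trans_le (min_le_right _ _))
      · exact h1 u hu x (hx.trans_le (min_le_left _ _))
  obtain ⟨ε, hε, hH⟩ := hunif (insert ϖ t)
  have hpow : ∀ k : ℕ, ∀ x : Kˣ, ‖(x : K)‖ < ε →
      ‖((x * ϖ ^ k : Kˣ) : K)‖ < ε ∧ H (x * ϖ ^ k) = H x := by
    intro k x hx
    induction k with
    | zero => simpa using hx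
    | succ k ih =>
      rw [pow_succ, ← mul_assoc]
      refine ⟨?_, ?_⟩
      · rw [Units.val_mul, norm_mul]
        calc _ ≤ ‖((x * ϖ ^ k : Kˣ) : K)‖ * 1 := by gcongr
          _ < ε := by rw [mul_one]; exact ih.1
      · rw [hH ϖ (Finset.mem_insert_self _ _) _ ih.1, ih.2]
  obtain ⟨y, hy, hy'⟩ := NormedField.exists_norm_lt K hε
  let x₀ : Kˣ := Units.mk0 y (norm_pos_iff.1 hy)
  have hx₀ : ‖(x₀ : K)‖ < ε := hy'
  refine ⟨H x₀, ε, hε, fun x hx => ?_⟩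
  have hmain : H x = H x₀ := by
    obtain ⟨a, ha, n, hn⟩ := ht (x₀⁻¹ * x)
    have ha' : a ∈ insert ϖ t := Finset.mem_insert_of_mem ha
    obtain ⟨k, rfl | rfl⟩ := n.eq_nat_or_neg
    · have h1 : x * ϖ ^ k = x₀ * a * (a⁻¹ * (x₀⁻¹ * x * ϖ ^ (k : ℤ))) := by
        rw [zpow_natCast]; group
      rw [← (hpow k x hx).2, h1, hHU _ hn, hH a ha' x₀ hx₀]
    · have h1 : x = x₀ * ϖ ^ k * a * (a⁻¹ * (x₀⁻¹ * x * ϖ ^ (-(k : ℤ)))) := by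
        rw [zpow_neg, zpow_natCast, mul_assoc (x₀ * ϖ ^ k), mul_inv_cancel_left,
          mul_comm (x₀⁻¹ * x), mul_assoc x₀, mul_inv_cancel_left, mul_inv_cancel_left]
      rw [h1, hHU _ hn, hH a ha' _ (hpow k x₀ hx₀).1, (hpow k x₀ hx₀).2]
  rw [← hmain]
  simp [H]

lemma Cc_eq_zero {f : K → ℂ} (hlc : IsLocallyConstant f) (h1 : ∀ x, x ≠ 0 → f x = 0) : f = 0 := by
  funext x
  by_cases hx0 : x = 0
  · subst hx0
    have ho := hlc.isOpen_fiber (f 0)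
    obtain ⟨ε, hε, hb⟩ := Metric.isOpen_iff.1 ho 0 rfl
    obtain ⟨y, hy, hy'⟩ := NormedField.exists_norm_lt K hε
    have : f y = f 0 := hb (by simpa using hy')
    rw [← this]
    exact h1 y (norm_pos_iff.1 hy)
  · exact h1 x hx0

end DegOne

/-! ### The three conditions -/

section Final

set_option linter.unusedSectionVars false

open Aff

variable {K : Type*} [NontriviallyNormedField K] [IsUltrametricDist K] [ProperSpace K]
variable {V : Type*} [AddCommGroup V] [Module ℂ V]

lemma coinv_to_SSx {ρ : Rep K V} {ψ : AddChar K ℂ}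
    (hψlc : IsLocallyConstant (⇑ψ)) {Φ : V →ₗ[ℂ] (Kˣ → ℂ)}
    (hΦ : GRep.Equivariant ρ (repCx K ψ) Φ) (hCb : ∀ v, Φ v ∈ Cb K)
    {v : V} (hv : v ∈ sCoinvKer ρ) : Φ v ∈ SSx K := by
  have h : sCoinvKer ρ ≤ (SSx K).comap Φ := by
    refine Submodule.span_le.2 ?_
    rintro w ⟨b, v', rfl⟩
    simp only [SetLike.mem_coe, Submodule.mem_comap, map_sub]
    rw [hΦ]
    exact Cb_sub_mem hψlc (hCb v') b
  exact h hv

lemma coinv_of_SSx {ρ : Rep K V} (hρ : IsSmoothRep ρ) {ψ : AddChar K ℂ}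
    {x₁ : K} (hx : MinNT ψ x₁) {Φ : V →ₗ[ℂ] (Kˣ → ℂ)}
    (hΦ : GRep.Equivariant ρ (repCx K ψ) Φ) (hinj : Function.Injective Φ)
    {v : V} (hv : Φ v ∈ SSx K) : v ∈ sCoinvKer ρ := by
  obtain ⟨α, h1, h2⟩ := SSx_ann hx hv
  refine (mem_sCoinvKer_iff hρ ψ v).2 ⟨α, ?_, h2⟩
  apply hinj
  rw [act_equivariant (sRes ρ) (sRes (repCx K ψ)) Φ (fun g x => hΦ _ x), h1, map_zero]

lemma eigen_germ {ρ : Rep K V} (hρ : IsSmoothRep ρ) {ψ : AddChar K ℂ}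
    (hψlc : IsLocallyConstant (⇑ψ)) {Φ : V →ₗ[ℂ] (Kˣ → ℂ)}
    (hΦ : GRep.Equivariant ρ (repCx K ψ) Φ) (hCb : ∀ v, Φ v ∈ Cb K)
    (hinj : Function.Injective Φ) (χ : Kˣ →* ℂˣ) {v : V}
    (hv : ∀ u, piZeroT ρ u (Submodule.Quotient.mk v) =
      (χ u : ℂ) • (Submodule.Quotient.mk v : V ⧸ sCoinvKer ρ)) :
    ∃ c : ℂ, ∃ ε > 0, ∀ x : Kˣ, ‖(x : K)‖ < ε → Φ v x = c * χ x := by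
  refine germ_eigen ψ χ (hCb v) ?_ ?_
  · have : {u : Kˣ | repCx K ψ (xT u) (Φ v) = Φ v} = {u : Kˣ | ρ (xT u) v = v} := by
      ext u
      show repCx K ψ (xT u) (Φ v) = Φ v ↔ ρ (xT u) v = v
      rw [← hΦ]
      exact hinj.eq_iff
    rw [this]
    exact smooth_t hρ v
  · intro u
    have h1 := hv u
    have h2 : ρ (xT u) v - (χ u : ℂ) • v ∈ sCoinvKer ρ := by
      rw [← Submodule.Quotient.eq]
      exact h1
    have h3 := coinv_to_SSx hψlc hΦ hCb h2
    rw [map_sub, map_smul, hΦ] at h3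
    exact h3

lemma cyclic_of_model {ρ : Rep K V} (hρ : IsSmoothRep ρ) {ψ : AddChar K ℂ}
    (hψlc : IsLocallyConstant (⇑ψ)) {x₁ : K} (hx : MinNT ψ x₁) {Φ : V →ₗ[ℂ] (Kˣ → ℂ)}
    (hΦ : GRep.Equivariant ρ (repCx K ψ) Φ) (hCb : ∀ v, Φ v ∈ Cb K)
    (hinj : Function.Injective Φ) : TCyclic (piZeroT ρ) := by
  intro χ
  by_cases h0 : ∀ w : ↥(tEigenT (piZeroT ρ) χ), w = 0
  · exact finrank_le_one 0 (fun w => ⟨0, by rw [h0 w, smul_zero]⟩)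
  push Not at h0
  obtain ⟨⟨x, hxm⟩, hx0⟩ := h0
  obtain ⟨v, rfl⟩ := Submodule.Quotient.mk_surjective _ x
  obtain ⟨c, ε, hε, hc⟩ := eigen_germ hρ hψlc hΦ hCb hinj χ hxm
  have hc0 : c ≠ 0 := by
    rintro rfl
    apply hx0
    apply Subtype.ext
    refine (Submodule.Quotient.mk_eq_zero _).2 (coinv_of_SSx hρ hx hΦ hinj ?_)
    exact SSx_of_Cb (hCb v) hε (fun u hu => by rw [hc u hu, zero_mul])
  refine finrank_le_one ⟨_, hxm⟩ ?_
  rintro ⟨y, hym⟩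
  obtain ⟨w, rfl⟩ := Submodule.Quotient.mk_surjective _ y
  obtain ⟨d, ε', hε', hd⟩ := eigen_germ hρ hψlc hΦ hCb hinj χ hym
  refine ⟨d / c, Subtype.ext ?_⟩
  show (d / c) • (Submodule.Quotient.mk v : V ⧸ sCoinvKer ρ) = Submodule.Quotient.mk w
  rw [← Submodule.Quotient.mk_smul, Submodule.Quotient.eq]
  refine coinv_of_SSx hρ hx hΦ hinj (SSx_of_Cb (hCb _) (lt_min hε hε') ?_)
  intro u hu
  rw [map_sub, map_smul, Pi.sub_apply, Pi.smul_apply, hc u (hu.trans_le (min_le_left _ _)),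
    hd u (hu.trans_le (min_le_right _ _)), smul_eq_mul]
  field_simp
  ring

lemma smoothChar_lc {χ : Kˣ →* ℂˣ} (hχ : SmoothMulChar χ) :
    IsLocallyConstant (fun u : Kˣ => (χ u : ℂ)) := by
  rw [IsLocallyConstant.iff_exists_open]
  intro u
  refine ⟨(fun w => u⁻¹ * w) ⁻¹' {w | χ w = 1}, hχ.preimage (continuous_const.mul continuous_id),
    by simp, ?_⟩
  intro w hw
  have hw' : χ (u⁻¹ * w) = 1 := hw
  rw [map_mul, map_inv, inv_mul_eq_one] at hw'
  show (χ w : ℂ) = χ u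
  rw [hw']

def eMap (χ : Kˣ →* ℂˣ) : ↥(CcK K) →ₗ[ℂ] (Kˣ → ℂ) where
  toFun g u := (χ u : ℂ) * (g : K → ℂ) u
  map_add' g h := by funext u; simp [mul_add]
  map_smul' a g := by funext u; simp; ring

lemma eMap_equivariant (ψ : AddChar K ℂ) (hψlc : IsLocallyConstant (⇑ψ)) (χ : Kˣ →* ℂˣ) :
    GRep.Equivariant (ERep ψ hψlc χ) (repCx K ψ) (eMap (K := K) χ) := by
  intro g f
  funext u
  show (χ u : ℂ) * (repCc K ψ χ g (f : K → ℂ)) u = ψ (g.s * u) * ((χ (u * g.t) : ℂ) * _)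
  rw [repCc_apply, map_mul χ, Units.val_mul, Units.val_mul]
  ring

lemma eMap_Cb {χ : Kˣ →* ℂˣ} (hχ : SmoothMulChar χ) (g : ↥(CcK K)) : eMap χ g ∈ Cb K := by
  rw [Cb_iff]
  obtain ⟨h1, h2⟩ := (mem_CcK K _).1 g.2
  refine ⟨(smoothChar_lc hχ).mul (h1.comp_continuous Units.continuous_val), ?_⟩
  obtain ⟨R, hR⟩ := h2.isBounded.exists_norm_le
  refine ⟨R, fun u hu => hR _ (subset_tsupport _ ?_)⟩
  exact right_ne_zero_of_mul hu

lemma eMap_injective (χ : Kˣ →* ℂˣ) : Function.Injective (eMap (K := K) χ) := by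
  rw [← LinearMap.ker_eq_bot, LinearMap.ker_eq_bot']
  intro g hg
  apply Subtype.ext
  refine Cc_eq_zero ((mem_CcK K _).1 g.2).1 (fun x hx => ?_)
  have h := congrFun hg (Units.mk0 x hx)
  exact (mul_eq_zero.1 h).resolve_left (Units.ne_zero _)

lemma embed_of_model {ρ : Rep K V} (hρ : IsSmoothRep ρ) {ψ : AddChar K ℂ}
    (hψlc : IsLocallyConstant (⇑ψ)) {x₁ : K} (hx : MinNT ψ x₁) (cs : CompSeries ρ)
    {Φ : V →ₗ[ℂ] (Kˣ → ℂ)}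
    (hΦ : GRep.Equivariant ρ (repCx K ψ) Φ) (hCb : ∀ v, Φ v ∈ Cb K)
    (hinj : Function.Injective Φ) (χ : Kˣ →* ℂˣ) (hχ : SmoothMulChar χ)
    (hne : tTwistKerT (piZeroT ρ) χ ≠ ⊤) :
    ∃ f : ↥(CcK K) →ₗ[ℂ] V, Function.Injective f ∧ GRep.Equivariant (ERep ψ hψlc χ) ρ f := by
  have hfin := piZero_finite hρ cs
  obtain ⟨x, hx0, hxe⟩ := eigen_of_twKer_ne_top (piZeroT ρ) ((Units.coeHom ℂ).comp χ) hne
  obtain ⟨v, rfl⟩ := Submodule.Quotient.mk_surjective _ x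
  obtain ⟨c, ε, hε, hc⟩ := eigen_germ hρ hψlc hΦ hCb hinj χ hxe
  have hc0 : c ≠ 0 := by
    rintro rfl
    apply hx0
    refine (Submodule.Quotient.mk_eq_zero _).2 (coinv_of_SSx hρ hx hΦ hinj ?_)
    exact SSx_of_Cb (hCb v) hε (fun u hu => by rw [hc u hu, zero_mul])
  have hSS : SSx K ≤ LinearMap.range Φ := by
    refine SSx_le_of_invariant hψlc hx (GRep.range_invariant ρ _ Φ hΦ) ?_ ?_
    · rintro _ ⟨w, rfl⟩
      exact hCb w
    · intro hbot
      have h1 : Φ v ∈ LinearMap.range Φ := ⟨v, rfl⟩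
      rw [hbot, Submodule.mem_bot] at h1
      have h2 : v = 0 := hinj (by rw [h1, map_zero])
      exact hx0 (by rw [h2]; rfl)
  have hrange : ∀ g, eMap χ g ∈ LinearMap.range Φ := by
    intro g
    have h1 : eMap χ g - ((g : K → ℂ) 0 / c) • Φ v ∈ SSx K := by
      obtain ⟨δ, hδ, hb⟩ := Metric.isOpen_iff.1
        (((mem_CcK K _).1 g.2).1.isOpen_fiber ((g : K → ℂ) 0)) 0 rfl
      refine SSx_of_Cb (Submodule.sub_mem _ (eMap_Cb hχ g) (Submodule.smul_mem _ _ (hCb v)))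
        (lt_min hε hδ) (fun u hu => ?_)
      have h2 : (g : K → ℂ) u = (g : K → ℂ) 0 :=
        hb (by simpa using hu.trans_le (min_le_right _ _))
      rw [Pi.sub_apply, Pi.smul_apply, hc u (hu.trans_le (min_le_left _ _)), smul_eq_mul]
      show (χ u : ℂ) * (g : K → ℂ) u - _ = 0
      rw [h2]
      field_simp
      ring
    have h3 := Submodule.add_mem _ (hSS h1)
      (Submodule.smul_mem _ ((g : K → ℂ) 0 / c) (⟨v, rfl⟩ : Φ v ∈ LinearMap.range Φ))
    rwa [sub_add_cancel] at h3
  let e := LinearEquiv.ofInjective Φ hinj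
  let f : ↥(CcK K) →ₗ[ℂ] V := e.symm.toLinearMap.comp ((eMap χ).codRestrict _ hrange)
  have hf : ∀ g, Φ (f g) = eMap χ g := by
    intro g
    exact congrArg Subtype.val (e.apply_symm_apply ((eMap χ).codRestrict _ hrange g))
  refine ⟨f, ?_, ?_⟩
  · intro g h hgh
    apply eMap_injective χ
    rw [← hf, ← hf, hgh]
  · intro g h
    apply hinj
    rw [hf, hΦ, hf, eMap_equivariant]

/-- The indicator function of the ring of integers. -/
def indO : ↥(CcK K) := ⟨(Metric.closedBall (0 : K) 1).indicator (fun _ => 1), by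
  rw [mem_CcK]
  refine ⟨?_, ?_⟩
  · have hclo := IsUltrametricDist.isClopen_closedBall (0 : K) one_ne_zero
    rw [IsLocallyConstant.iff_exists_open]
    intro x
    by_cases hx : x ∈ Metric.closedBall (0 : K) 1
    · refine ⟨_, hclo.isOpen, hx, fun y hy => ?_⟩
      rw [Set.indicator_of_mem hx, Set.indicator_of_mem hy]
    · refine ⟨_, hclo.compl.isOpen, hx, fun y hy => ?_⟩
      rw [Set.indicator_of_notMem hx, Set.indicator_of_notMem hy]
  · refine HasCompactSupport.intro (isCompact_closedBall (0 : K) 1) (fun x hx => ?_)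
    exact Set.indicator_of_notMem hx _⟩

lemma indO_zero : ((indO : ↥(CcK K)) : K → ℂ) 0 = 1 := by
  show (Metric.closedBall (0 : K) 1).indicator (fun _ => (1 : ℂ)) 0 = 1
  rw [Set.indicator_of_mem]
  simp

lemma eigen_sInv {ρ : Rep K V} (hρ : IsSmoothRep ρ) (χ : Kˣ →* ℂˣ) {v : V}
    (hv : v ∈ tEigen ρ χ) : v ∈ sInv ρ := by
  intro b
  obtain ⟨ε, hε, h⟩ := smooth_s hρ v
  have hv' : ∀ u, ρ (xT u) v = (χ u : ℂ) • v := hv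
  obtain ⟨y, hy, hy'⟩ := NormedField.exists_norm_lt K (div_pos hε (by positivity : 0 < ‖b‖ + 1))
  let u : Kˣ := Units.mk0 y (norm_pos_iff.1 hy)
  have h1 : ρ (xT u) (ρ (sS b) v) = ρ (xT u) v := by
    rw [rep_t_s, hv', map_smul, h]
    show ‖y * b‖ < ε
    rw [norm_mul]
    rw [lt_div_iff₀ (by positivity)] at hy'
    nlinarith [norm_nonneg y]
  rw [← rep_t_inv ρ u (ρ (sS b) v), h1, rep_t_inv]

lemma perfect_of_cyclic {ρ : Rep K V} (hρ : IsSmoothRep ρ) {ψ : AddChar K ℂ}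
    (hψlc : IsLocallyConstant (⇑ψ)) {x₁ : K} (hx : MinNT ψ x₁) (cs : CompSeries ρ)
    {Φ : V →ₗ[ℂ] (Kˣ → ℂ)}
    (hΦ : GRep.Equivariant ρ (repCx K ψ) Φ) (hCb : ∀ v, Φ v ∈ Cb K)
    (hker : LinearMap.ker Φ ≤ sInv ρ) (hcyc : TCyclic (piZeroT ρ))
    (hemb : ∀ χ : Kˣ →* ℂˣ, SmoothMulChar χ → tTwistKerT (piZeroT ρ) χ ≠ ⊤ →
      ∃ f : ↥(CcK K) →ₗ[ℂ] V, Function.Injective f ∧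
        GRep.Equivariant (ERep ψ hψlc χ) ρ f) : Perfect ρ := by
  intro χ hχ
  rw [Submodule.eq_bot_iff]
  intro v hv
  by_contra hv0
  have hfin := piZero_finite hρ cs
  have hv' : ∀ u, ρ (xT u) v = (χ u : ℂ) • v := hv
  have hvS := eigen_sInv hρ χ hv
  have hmk : (Submodule.Quotient.mk v : V ⧸ sCoinvKer ρ) ≠ 0 := fun h =>
    hv0 (sInv_inf_sCoinvKer hρ hvS ((Submodule.Quotient.mk_eq_zero _).1 h))
  have hmke : ∀ u, piZeroT ρ u (Submodule.Quotient.mk v) =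
      (χ u : ℂ) • (Submodule.Quotient.mk v : V ⧸ sCoinvKer ρ) := by
    intro u
    show (Submodule.Quotient.mk (ρ (xT u) v) : V ⧸ sCoinvKer ρ) = _
    rw [hv' u]; rfl
  obtain ⟨f, hfinj, hf⟩ := hemb χ hχ
    (twKer_ne_top_of_eigen (piZeroT ρ) ((Units.coeHom ℂ).comp χ) hmk hmke)
  let e : V := f indO
  have hee : ∀ u, piZeroT ρ u (Submodule.Quotient.mk e) =
      (χ u : ℂ) • (Submodule.Quotient.mk e : V ⧸ sCoinvKer ρ) := by
    intro u
    show (Submodule.Quotient.mk (ρ (xT u) e) : V ⧸ sCoinvKer ρ) = _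
    rw [← Submodule.Quotient.mk_smul, Submodule.Quotient.eq]
    have h1 : ρ (xT u) e - (χ u : ℂ) • e =
        f (ERep ψ hψlc χ (xT u) indO - (χ u : ℂ) • indO) := by
      rw [map_sub, map_smul, hf]
    rw [h1]
    set g := ERep ψ hψlc χ (xT u) indO - (χ u : ℂ) • indO with hg
    have hg0 : (g : K → ℂ) 0 = 0 := by
      show repCc K ψ χ (xT u) ((indO : ↥(CcK K)) : K → ℂ) 0
        - (χ u : ℂ) * ((indO : ↥(CcK K)) : K → ℂ) 0 = 0
      rw [repCc_apply]
      simp [indO_zero]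
    obtain ⟨α, h2, h3⟩ := Cc_ann hx g.2 hg0
    refine (mem_sCoinvKer_iff hρ ψ _).2 ⟨α, ?_, h3⟩
    rw [← act_equivariant (sRes (ERep ψ hψlc χ)) (sRes ρ) f (fun g x => hf _ x)]
    have h4 : act (sRes (ERep ψ hψlc χ)) α g = 0 := by
      apply Subtype.ext
      funext x
      rw [act_E, h2]; rfl
    rw [h4, map_zero]
  obtain ⟨w, hw⟩ := finrank_le_one_iff.1 (hcyc χ)
  obtain ⟨a, ha⟩ := hw ⟨_, hmke⟩
  obtain ⟨b, hb⟩ := hw ⟨_, hee⟩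
  have ha0 : a ≠ 0 := by
    rintro rfl
    rw [zero_smul] at ha
    exact hmk (congrArg Subtype.val ha).symm
  have hev : e - (b / a) • v ∈ sCoinvKer ρ := by
    rw [← Submodule.Quotient.eq, Submodule.Quotient.mk_smul]
    have ha' : a • (w : V ⧸ sCoinvKer ρ) = Submodule.Quotient.mk v := congrArg Subtype.val ha
    have hb' : b • (w : V ⧸ sCoinvKer ρ) = Submodule.Quotient.mk e := congrArg Subtype.val hb
    rw [← ha', ← hb', smul_smul, div_mul_cancel₀ _ ha0]
  have hΦv : Φ v = 0 := Cb_no_eigen ψ χ (hCb v) (fun u => by rw [← hΦ, hv', map_smul])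
  have hΦe : Φ e ∈ SSx K := by
    have := coinv_to_SSx hψlc hΦ hCb hev
    rwa [map_sub, map_smul, hΦv, smul_zero, sub_zero] at this
  obtain ⟨α, h1, h2⟩ := SSx_ann hx hΦe
  rw [← act_equivariant (sRes ρ) (sRes (repCx K ψ)) Φ (fun g x => hΦ _ x),
    ← act_equivariant (sRes (ERep ψ hψlc χ)) (sRes ρ) f (fun g x => hf _ x)] at h1
  have h3 := hker h1
  set g := act (sRes (ERep ψ hψlc χ)) α indO with hg
  have h4 : ∀ t, repCc K ψ χ (sS t) (g : K → ℂ) = g := by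
    intro t
    have h5 : ERep ψ hψlc χ (sS t) g = g := hfinj (by rw [hf]; exact h3 t)
    exact congrArg Subtype.val h5
  have h6 := Cc_no_inv hx χ ((mem_CcK K _).1 g.2).1 h4
  have h7 := congrFun h6 0
  rw [hg, act_E, indO_zero, mul_one] at h7
  exact h2 h7

end Final

section Statements

open Aff

variable {K : Type*} [NontriviallyNormedField K] [IsUltrametricDist K] [ProperSpace K]

theorem statement9
    (hchar : (2 : K) ≠ 0)
    (ψ : AddChar K ℂ) (hψlc : IsLocallyConstant (⇑ψ)) (hψne : ψ ≠ 1)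
    {V : Type*} [AddCommGroup V] [Module ℂ V]
    (ρ : Rep K V) (hρ : IsSmoothRep ρ) (c : CompSeries ρ)
    (hdeg : c.deg (SRep ψ hψlc) = 1) :
    (Perfect ρ ↔ ∃ f : V →ₗ[ℂ] (Kˣ → ℂ), Function.Injective f ∧
      GRep.Equivariant ρ (repCx K ψ) f ∧ LinearMap.range f ≤ Cb K) ∧
    (Perfect ρ ↔ (TCyclic (piZeroT ρ) ∧ ∀ χ : Kˣ →* ℂˣ, SmoothMulChar χ →
      tTwistKerT (piZeroT ρ) χ ≠ ⊤ →
      ∃ f : ↥(CcK K) →ₗ[ℂ] V, Function.Injective f ∧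
        GRep.Equivariant (ERep ψ hψlc χ) ρ f)) := by
  obtain ⟨x₁, hx⟩ := exists_minNT ψ hψlc hψne
  obtain ⟨Φ, hΦ, hCb, hker⟩ := exists_model hρ hψlc hx c hdeg
  have hinj : Perfect ρ → Function.Injective Φ := by
    intro hp
    rw [← LinearMap.ker_eq_bot, eq_bot_iff, ← sInv_eq_bot hρ c hp]
    exact hker
  refine ⟨⟨fun hp => ⟨Φ, hinj hp, hΦ, ?_⟩, ?_⟩, ⟨fun hp => ⟨?_, ?_⟩, ?_⟩⟩
  · rintro _ ⟨v, rfl⟩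
    exact hCb v
  · rintro ⟨f, hf, hfe, hfC⟩ χ _
    rw [Submodule.eq_bot_iff]
    intro v hv
    have hv' : ∀ u, ρ (xT u) v = (χ u : ℂ) • v := hv
    apply hf
    rw [map_zero]
    exact Cb_no_eigen ψ χ (hfC ⟨v, rfl⟩) (fun u => by rw [← hfe, hv', map_smul])
  · exact cyclic_of_model hρ hψlc hx hΦ hCb (hinj hp)
  · exact fun χ hχ hne => embed_of_model hρ hψlc hx c hΦ hCb (hinj hp) χ hχ hne
  · rintro ⟨hcyc, hemb⟩
    exact perfect_of_cyclic hρ hψlc hx c hΦ hCb hker hcyc hemb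

end Statements

end PSW
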